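/- arXiv:2509.11069 — 6 statements merged into one kernel-verified Lean document; each statement's English description precedes it below -/
import Mathlib

section
/- Let A : ℝ → Matrix (Fin n) (Fin n) ℝ be RAP and suppose x' = A(t)x has an (α,K,P)-exponential dichotomy whose Green kernel G has the RAP-integral property. Let h : ℝ → ℝⁿ be RAP and let ξ be the unique RAP solution of z' = A(t)z + h(t). Fix a delay a > 0 and let g : ℝ × ℝⁿ × ℝⁿ → ℝⁿ be bounded, RAP in t uniformly with respect to (x,z) in bounded sets, and satisfy ‖g(t,x,y) − g(t,z,v)‖ ≤ M₁(r)(‖x−z‖ + ‖y−v‖) for all t ∈ ℝ and ‖x‖,‖y‖,‖z‖,‖v‖ ≤ r. Then for every fixed r > 0 there exists ν₀ = ν₀(r) > 0 such that for every ν ∈ [0,ν₀] the delayed system y'(t) = A(t)y(t) + h(t) + ν·g(t, y(t), y(t−a)) has exactly one RAP solution ψ_ν with sup_{t∈ℝ} ‖ψ_ν(t) − ξ(t)‖ ≤ r; moreover ψ_ν(t) → ξ(t) for every t ∈ ℝ as ν → 0⁺. -/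
open MeasureTheory Filter Metric

noncomputable def opNorm {n : ℕ} (A : Matrix (Fin n) (Fin n) ℝ) : ℝ :=
  ‖LinearMap.toContinuousLinearMap (Matrix.toEuclideanLin A)‖

noncomputable def mulVecE {n : ℕ} (A : Matrix (Fin n) (Fin n) ℝ)
    (v : EuclideanSpace ℝ (Fin n)) : EuclideanSpace ℝ (Fin n) :=
  Matrix.toEuclideanLin A v

noncomputable def clmToMatrix {n : ℕ}
    (L : EuclideanSpace ℝ (Fin n) →L[ℝ] EuclideanSpace ℝ (Fin n)) :
    Matrix (Fin n) (Fin n) ℝ :=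
  Matrix.toEuclideanLin.symm (L : EuclideanSpace ℝ (Fin n) →ₗ[ℝ] EuclideanSpace ℝ (Fin n))

def RelativelyDense (S : Set ℝ) : Prop :=
  ∃ l > 0, ∀ a : ℝ, ∃ τ ∈ S, τ ∈ Set.Icc a (a + l)

def RAP {E : Type*} [NormedAddCommGroup E] (f : ℝ → E) : Prop :=
  (∃ C, ∀ t, ‖f t‖ ≤ C) ∧ UniformContinuous f ∧
  ∀ ε > 0, RelativelyDense
    {τ | Filter.limsup (fun t => ‖f (t + τ) - f t‖) (Filter.cocompact ℝ) < ε}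

def RAPUniform {E F : Type*} [NormedAddCommGroup E] [NormedAddCommGroup F]
    (f : ℝ → E → F) (S : Set E) : Prop :=
  (∃ C, ∀ t, ∀ x ∈ S, ‖f t x‖ ≤ C) ∧
  UniformContinuousOn (fun p : ℝ × E => f p.1 p.2) (Set.univ ×ˢ S) ∧
  ∀ ε > 0, RelativelyDense
    {τ | Filter.limsup (fun t => ⨆ x ∈ S, ‖f (t + τ) x - f t x‖) (Filter.cocompact ℝ) < ε}

def RAPMatrix {n : ℕ} (A : ℝ → Matrix (Fin n) (Fin n) ℝ) : Prop :=
  ∀ i j, RAP (fun t => A t i j)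

def IsFundamentalMatrix {n : ℕ} (A Φ : ℝ → Matrix (Fin n) (Fin n) ℝ) : Prop :=
  Φ 0 = 1 ∧ (∀ t, IsUnit (Φ t)) ∧
  ∀ t i j, HasDerivAt (fun τ => Φ τ i j) ((A t * Φ t) i j) t

def ExpDichotomy {n : ℕ} (Φ : ℝ → Matrix (Fin n) (Fin n) ℝ)
    (α K : ℝ) (P : Matrix (Fin n) (Fin n) ℝ) : Prop :=
  P * P = P ∧
  (∀ t s : ℝ, s ≤ t → opNorm (Φ t * P * (Φ s)⁻¹) ≤ K * Real.exp (-α * (t - s))) ∧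
  (∀ t s : ℝ, t < s → opNorm (Φ t * (1 - P) * (Φ s)⁻¹) ≤ K * Real.exp (-α * (s - t)))

noncomputable def GreenKernel {n : ℕ} (Φ : ℝ → Matrix (Fin n) (Fin n) ℝ)
    (P : Matrix (Fin n) (Fin n) ℝ) (t s : ℝ) : Matrix (Fin n) (Fin n) ℝ :=
  if s ≤ t then Φ t * P * (Φ s)⁻¹ else -(Φ t * (1 - P) * (Φ s)⁻¹)

def RAPIntegralProperty {n : ℕ} (G : ℝ → ℝ → Matrix (Fin n) (Fin n) ℝ) : Prop :=
  ∀ h : ℝ → EuclideanSpace ℝ (Fin n), RAP h →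
    RAP (fun t => ∫ s : ℝ, mulVecE (G t s) (h s))

/-- Uniform remote translation numbers. -/
def RTr {E F : Type*} [NormedAddCommGroup F] (f : ℝ → E → F) (S : Set E) (ε : ℝ) : Set ℝ :=
  {τ | ∀ᶠ t in cocompact ℝ, ∀ x ∈ S, ‖f (t + τ) x - f t x‖ < ε}

theorem tendsto_add_cocompact (τ : ℝ) : Tendsto (fun t : ℝ => t + τ) (cocompact ℝ) (cocompact ℝ) :=
  (Homeomorph.addRight τ).isClosedEmbedding.tendsto_cocompact

theorem RTr_add {E F : Type*} [NormedAddCommGroup F] {f : ℝ → E → F} {S : Set E} {ε δ τ σ : ℝ}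
    (h1 : τ ∈ RTr f S ε) (h2 : σ ∈ RTr f S δ) : τ + σ ∈ RTr f S (ε + δ) := by
  have h3 := (tendsto_add_cocompact σ).eventually h1
  filter_upwards [h3, h2] with t a b x hx
  have := norm_add_le (f (t + σ + τ) x - f (t + σ) x) (f (t + σ) x - f t x)
  rw [show t + (τ + σ) = t + σ + τ by ring]
  have e : f (t + σ + τ) x - f t x =
    (f (t + σ + τ) x - f (t + σ) x) + (f (t + σ) x - f t x) := by abel
  rw [e]
  linarith [a x hx, b x hx]

theorem RTr_neg {E F : Type*} [NormedAddCommGroup F] {f : ℝ → E → F} {S : Set E} {ε τ : ℝ}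
    (h1 : τ ∈ RTr f S ε) : -τ ∈ RTr f S ε := by
  have h3 := (tendsto_add_cocompact (-τ)).eventually h1
  filter_upwards [h3] with t a x hx
  have := a x hx
  rw [norm_sub_rev]
  simpa using this

theorem RelativelyDense.mono' {S T : Set ℝ} (h : RelativelyDense S) (hST : S ⊆ T) :
    RelativelyDense T := by
  obtain ⟨l, hl, h⟩ := h
  refine ⟨l, hl, fun a => ?_⟩
  obtain ⟨τ, h1, h2⟩ := h a
  exact ⟨τ, hST h1, h2⟩

theorem RTr_inter {E F E' F' : Type*} [NormedAddCommGroup F] [NormedAddCommGroup F']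
    {f : ℝ → E → F} {S : Set E} {g : ℝ → E' → F'} {S' : Set E'}
    (hf : ∀ ε > 0, RelativelyDense (RTr f S ε))
    (hg : ∀ ε > 0, RelativelyDense (RTr g S' ε))
    (hgc : ∀ ε > 0, ∃ δ > 0, ∀ τ : ℝ, |τ| < δ → τ ∈ RTr g S' ε) :
    ∀ ε > 0, RelativelyDense (RTr f S ε ∩ RTr g S' ε) := by
  intro ε hε
  obtain ⟨l1, hl1, h1⟩ := hf (ε / 2) (by positivity)
  obtain ⟨l2, hl2, h2⟩ := hg (ε / 3) (by positivity)
  obtain ⟨δ, hδ, h3⟩ := hgc (ε / 3) (by positivity)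
  set l := max l1 l2 with hl
  have hl1' : l1 ≤ l := le_max_left _ _
  have hl2' : l2 ≤ l := le_max_right _ _
  let D : Set ℝ := {d | d ∈ Set.Icc (-l) l ∧ ∃ τ ∈ RTr f S (ε / 2), τ - d ∈ RTr g S' (ε / 3)}
  have hD : TotallyBounded D :=
    (isCompact_Icc (a := -l) (b := l)).totallyBounded.subset (fun d hd => hd.1)
  obtain ⟨Fs, hFD, hFfin, hcov⟩ := Metric.finite_approx_of_totallyBounded hD δ hδ
  have hch : ∀ x : ℝ, ∃ τ : ℝ, x ∈ Fs → τ ∈ RTr f S (ε / 2) ∧ τ - x ∈ RTr g S' (ε / 3) := by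
    intro x
    by_cases hx : x ∈ Fs
    · obtain ⟨τ, a, b⟩ := (hFD hx).2
      exact ⟨τ, fun _ => ⟨a, b⟩⟩
    · exact ⟨0, fun h => absurd h hx⟩
  choose θ hθ using hch
  obtain ⟨M, hM⟩ := (hFfin.image (fun x => |θ x|)).bddAbove
  have hM' : ∀ x ∈ Fs, |θ x| ≤ M := fun x hx => hM ⟨x, hx, rfl⟩
  refine ⟨2 * |M| + l, by positivity, fun a => ?_⟩
  obtain ⟨τ, hτ, hτI⟩ := h1 (a + |M|)
  obtain ⟨σ, hσ, hσI⟩ := h2 (a + |M|)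
  have hd : τ - σ ∈ D := by
    refine ⟨⟨?_, ?_⟩, τ, hτ, by simpa using hσ⟩
    · linarith [hτI.1, hσI.2]
    · linarith [hτI.2, hσI.1]
  obtain ⟨x, hx, hxd⟩ := Set.mem_iUnion₂.1 (hcov hd)
  have hx2 := hθ x hx
  have hb := abs_le.1 (hM' x hx)
  have hMM := le_abs_self M
  refine ⟨τ - θ x, ⟨?_, ?_⟩, ?_, ?_⟩
  · have := RTr_add hτ (RTr_neg hx2.1)
    simpa [sub_eq_add_neg] using this
  · have := RTr_add (RTr_add hσ (RTr_neg hx2.2)) (h3 ((τ - σ) - x) hxd)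
    rwa [show σ + -(θ x - x) + (τ - σ - x) = τ - θ x by ring,
      show ε / 3 + ε / 3 + ε / 3 = ε by ring] at this
  · linarith [hτI.1]
  · linarith [hτI.2]

theorem RTr_cont {F : Type*} [NormedAddCommGroup F] {f : ℝ → F} (hf : UniformContinuous f) :
    ∀ ε > 0, ∃ δ > 0, ∀ τ : ℝ, |τ| < δ → τ ∈ RTr (fun t (_ : Unit) => f t) Set.univ ε := by
  intro ε hε
  obtain ⟨δ, hδ, h⟩ := Metric.uniformContinuous_iff.1 hf ε hε
  refine ⟨δ, hδ, fun τ hτ => Eventually.of_forall fun t x _ => ?_⟩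
  rw [← dist_eq_norm]
  apply h
  simpa [Real.dist_eq] using hτ

theorem limsup_aux {u : ℝ → ℝ} {C : ℝ} (h0 : ∀ t, 0 ≤ u t) (hC : ∀ t, u t ≤ C) {ε : ℝ} :
    (limsup u (cocompact ℝ) < ε → ∀ᶠ t in cocompact ℝ, u t < ε) ∧
    (∀ δ, δ < ε → (∀ᶠ t in cocompact ℝ, u t < δ) → limsup u (cocompact ℝ) < ε) := by
  constructor
  · intro h
    exact eventually_lt_of_limsup_lt h ⟨C, eventually_map.2 (Eventually.of_forall hC)⟩
  · intro δ hδ h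
    refine lt_of_le_of_lt ?_ hδ
    refine limsup_le_of_le ?_ (h.mono fun t ht => ht.le)
    exact IsBoundedUnder.isCoboundedUnder_le
      ⟨0, eventually_map.2 (Eventually.of_forall h0)⟩

theorem RAP_iff {E : Type*} [NormedAddCommGroup E] (f : ℝ → E) : RAP f ↔
    (∃ C, ∀ t, ‖f t‖ ≤ C) ∧ UniformContinuous f ∧
      ∀ ε > 0, RelativelyDense (RTr (fun t (_ : Unit) => f t) Set.univ ε) := by
  unfold RAP
  refine and_congr_right fun hb => and_congr_right fun huc => ?_
  obtain ⟨C, hC⟩ := hb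
  have hb : ∀ τ t, ‖f (t + τ) - f t‖ ≤ C + C := fun τ t =>
    (norm_sub_le _ _).trans (add_le_add (hC _) (hC _))
  constructor
  · intro h ε hε
    refine (h ε hε).mono' fun τ hτ => ?_
    have := (limsup_aux (fun t => norm_nonneg _) (hb τ)).1 hτ
    exact this.mono fun t ht x _ => ht
  · intro h ε hε
    refine (h (ε / 2) (by positivity)).mono' fun τ hτ => ?_
    refine (limsup_aux (fun t => norm_nonneg _) (hb τ)).2 (ε / 2) (by linarith) ?_
    exact hτ.mono fun t ht => ht () trivial

theorem RAPUniform_RTr {E F : Type*} [NormedAddCommGroup E] [NormedAddCommGroup F]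
    {f : ℝ → E → F} {S : Set E} (h : RAPUniform f S) :
    ∀ ε > 0, RelativelyDense (RTr f S ε) := by
  obtain ⟨⟨C, hC⟩, -, h⟩ := h
  intro ε hε
  have hb : ∀ τ t x, ⨆ (_ : x ∈ S), ‖f (t + τ) x - f t x‖ ≤ |C| + |C| := by
    intro τ t x
    refine Real.iSup_le (fun hx => ?_) (by positivity)
    exact (norm_sub_le _ _).trans (add_le_add ((hC _ x hx).trans (le_abs_self _))
      ((hC _ x hx).trans (le_abs_self _)))
  refine (h ε hε).mono' fun τ hτ => ?_
  have h1 := (limsup_aux (C := |C| + |C|)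
    (fun t => Real.iSup_nonneg fun x => Real.iSup_nonneg fun _ => norm_nonneg _)
    (fun t => Real.iSup_le (hb τ t) (by positivity))).1 hτ
  refine h1.mono fun t ht x hx => lt_of_le_of_lt ?_ ht
  refine le_trans ?_ (le_ciSup (f := fun x => ⨆ (_ : x ∈ S), ‖f (t + τ) x - f t x‖)
    ⟨|C| + |C|, ?_⟩ x)
  · simp [hx]
  · rintro _ ⟨y, rfl⟩
    exact hb τ t y

theorem RAP.sub' {E : Type*} [NormedAddCommGroup E] {f g : ℝ → E} (hf : RAP f) (hg : RAP g) :
    RAP (fun t => f t - g t) := by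
  rw [RAP_iff] at *
  obtain ⟨⟨C, hC⟩, hfu, hf⟩ := hf
  obtain ⟨⟨D, hD⟩, hgu, hg⟩ := hg
  refine ⟨⟨C + D, fun t => (norm_sub_le _ _).trans (add_le_add (hC t) (hD t))⟩, hfu.sub hgu, ?_⟩
  intro ε hε
  refine (RTr_inter hf hg (RTr_cont hgu) (ε / 2) (by positivity)).mono' ?_
  rintro τ ⟨h1, h2⟩
  filter_upwards [h1, h2] with t a b x hx
  have := norm_sub_le (f (t + τ) - f t) (g (t + τ) - g t)
  have e : f (t + τ) - g (t + τ) - (f t - g t) =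
    (f (t + τ) - f t) - (g (t + τ) - g t) := by abel
  rw [e]
  linarith [a x hx, b x hx]

theorem RAP.neg' {E : Type*} [NormedAddCommGroup E] {f : ℝ → E} (hf : RAP f) :
    RAP (fun t => - f t) := by
  have h0 : RAP (fun _ : ℝ => (0 : E)) := by
    rw [RAP_iff]
    refine ⟨⟨0, by simp⟩, uniformContinuous_const, fun ε hε => ⟨1, one_pos, fun a => ⟨a, ?_, ?_⟩⟩⟩
    · simp [RTr, hε]
    · simp
  simpa using h0.sub' hf

theorem RAP.add' {E : Type*} [NormedAddCommGroup E] {f g : ℝ → E} (hf : RAP f) (hg : RAP g) :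
    RAP (fun t => f t + g t) := by
  simpa using hf.sub' hg.neg'

theorem RAP.smul' {E : Type*} [NormedAddCommGroup E] [NormedSpace ℝ E] {f : ℝ → E} (hf : RAP f)
    (c : ℝ) : RAP (fun t => c • f t) := by
  rw [RAP_iff] at *
  obtain ⟨⟨C, hC⟩, hfu, hf⟩ := hf
  refine ⟨⟨|c| * C, fun t => ?_⟩, hfu.const_smul c, ?_⟩
  · rw [norm_smul, Real.norm_eq_abs]
    exact mul_le_mul_of_nonneg_left (hC t) (abs_nonneg c)
  intro ε hε
  refine (hf (ε / (|c| + 1)) (by positivity)).mono' fun τ hτ => ?_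
  filter_upwards [hτ] with t a x hx
  have h1 := a x hx
  rw [← smul_sub, norm_smul, Real.norm_eq_abs]
  rw [lt_div_iff₀ (by positivity)] at h1
  have := norm_nonneg (f (t + τ) - f t)
  nlinarith

theorem RAP.limit' {E : Type*} [NormedAddCommGroup E] {f : ℝ → E}
    (hlim : ∀ ε > 0, ∃ g : ℝ → E, RAP g ∧ ∀ t, ‖f t - g t‖ ≤ ε) : RAP f := by
  have hfu : UniformContinuous f := by
    rw [Metric.uniformContinuous_iff]
    intro ε hε
    obtain ⟨g, hg, h⟩ := hlim (ε / 4) (by positivity)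
    obtain ⟨δ, hδ, hu⟩ := Metric.uniformContinuous_iff.1 hg.2.1 (ε / 4) (by positivity)
    refine ⟨δ, hδ, fun x y hxy => ?_⟩
    have h1 := hu hxy
    have h2 := h x
    have h3 := h y
    rw [← dist_eq_norm] at h2 h3
    have h4 := dist_triangle4 (f x) (g x) (g y) (f y)
    rw [dist_comm (g y)] at h4
    linarith
  rw [RAP_iff]
  refine ⟨?_, hfu, fun ε hε => ?_⟩
  · obtain ⟨g, hg, h⟩ := hlim 1 one_pos
    obtain ⟨C, hC⟩ := hg.1
    refine ⟨1 + C, fun t => ?_⟩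
    have := norm_add_le (f t - g t) (g t)
    rw [sub_add_cancel] at this
    linarith [h t, hC t]
  · obtain ⟨g, hg, h⟩ := hlim (ε / 3) (by positivity)
    rw [RAP_iff] at hg
    refine (hg.2.2 (ε / 3) (by positivity)).mono' fun τ hτ => ?_
    filter_upwards [hτ] with t a x hx
    have h1 := a x hx
    have h2 := h t
    have h3 := h (t + τ)
    rw [norm_sub_rev] at h2
    have e : f (t + τ) - f t = (f (t + τ) - g (t + τ)) + (g (t + τ) - g t) + (g t - f t) := by abel
    rw [e]
    have := norm_add₃_le (a := f (t + τ) - g (t + τ)) (b := g (t + τ) - g t) (c := g t - f t)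
    linarith

theorem RAP_comp {E : Type*} [NormedAddCommGroup E] {g : ℝ → E → E → E} {R M a : ℝ}
    (hg : RAPUniform (fun t (p : E × E) => g t p.1 p.2) (closedBall 0 R))
    (hL : ∀ t : ℝ, ∀ x y z v : E, ‖x‖ ≤ R → ‖y‖ ≤ R → ‖z‖ ≤ R → ‖v‖ ≤ R →
      ‖g t x y - g t z v‖ ≤ M * (‖x - z‖ + ‖y - v‖))
    {ψ : ℝ → E} (hψ : RAP ψ) (hψR : ∀ t, ‖ψ t‖ ≤ R) :
    RAP (fun t => g t (ψ t) (ψ (t - a))) := by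
  have hgT := RAPUniform_RTr hg
  obtain ⟨⟨C, hC⟩, hgu, -⟩ := hg
  rw [RAP_iff] at *
  obtain ⟨-, hψu, hψT⟩ := hψ
  have hmem : ∀ t s, (ψ t, ψ s) ∈ closedBall (0 : E × E) R := by
    intro t s
    rw [mem_closedBall_zero_iff, Prod.norm_def]
    exact max_le (hψR t) (hψR s)
  refine ⟨⟨C, fun t => hC t (ψ t, ψ (t - a)) (hmem _ _)⟩, ?_, fun ε hε => ?_⟩
  · have h1 : UniformContinuous (fun t => ψ (t - a)) :=
      hψu.comp (uniformContinuous_id.sub uniformContinuous_const)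
    have h2 : UniformContinuous (fun t => (t, ψ t, ψ (t - a))) :=
      uniformContinuous_id.prodMk (hψu.prodMk h1)
    have h3 := hgu.comp (uniformContinuousOn_univ.2 h2)
      (fun t _ => ⟨trivial, hmem t (t - a)⟩)
    exact uniformContinuousOn_univ.1 h3
  · have hpos : 0 < ε / (2 * (2 * |M| + 1)) := by positivity
    set δ := min (ε / 2) (ε / (2 * (2 * |M| + 1))) with hδ
    have hδ0 : 0 < δ := lt_min (by positivity) hpos
    refine (RTr_inter hgT hψT (RTr_cont hψu) δ hδ0).mono' ?_
    rintro τ ⟨h1, h2⟩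
    have h3 := (tendsto_add_cocompact (-a)).eventually h2
    filter_upwards [h1, h2, h3] with t b1 b2 b3 x hx
    have c1 := b1 (ψ (t + τ), ψ (t + τ - a)) (hmem _ _)
    have c2 := b2 () trivial
    have c3 := b3 () trivial
    have c4 := hL t (ψ (t + τ)) (ψ (t + τ - a)) (ψ t) (ψ (t - a)) (hψR _) (hψR _) (hψR _) (hψR _)
    rw [show t + -a + τ = t + τ - a by ring, show t + -a = t - a by ring] at c3
    simp only at c1 c2 c3
    have d1 : δ ≤ ε / 2 := min_le_left _ _
    have d2 : δ * (2 * (2 * |M| + 1)) ≤ ε := by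
      have := min_le_right (ε / 2) (ε / (2 * (2 * |M| + 1)))
      rw [← hδ, le_div_iff₀ (by positivity)] at this
      exact this
    have e : g (t + τ) (ψ (t + τ)) (ψ (t + τ - a)) - g t (ψ t) (ψ (t - a)) =
      (g (t + τ) (ψ (t + τ)) (ψ (t + τ - a)) - g t (ψ (t + τ)) (ψ (t + τ - a))) +
      (g t (ψ (t + τ)) (ψ (t + τ - a)) - g t (ψ t) (ψ (t - a))) := by abel
    rw [e]
    refine lt_of_le_of_lt (norm_add_le _ _) ?_
    have c5 : M * (‖ψ (t + τ) - ψ t‖ + ‖ψ (t + τ - a) - ψ (t - a)‖) ≤ |M| * (2 * δ) := by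
      refine (mul_le_mul_of_nonneg_right (le_abs_self M) (by positivity)).trans ?_
      exact mul_le_mul_of_nonneg_left (by linarith) (abs_nonneg M)
    nlinarith

section green
variable {n : ℕ}

theorem mulVecE_norm_le (M : Matrix (Fin n) (Fin n) ℝ) (v : EuclideanSpace ℝ (Fin n)) :
    ‖mulVecE M v‖ ≤ opNorm M * ‖v‖ :=
  (LinearMap.toContinuousLinearMap (Matrix.toEuclideanLin M)).le_opNorm v

theorem mulVecE_mul (M N : Matrix (Fin n) (Fin n) ℝ) (v : EuclideanSpace ℝ (Fin n)) :
    mulVecE (M * N) v = mulVecE M (mulVecE N v) := by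
  simp [mulVecE, Matrix.toLpLin_apply]

theorem mulVecE_one (v : EuclideanSpace ℝ (Fin n)) :
    mulVecE (1 : Matrix (Fin n) (Fin n) ℝ) v = v := by
  simp [mulVecE]

theorem mulVecE_neg (M : Matrix (Fin n) (Fin n) ℝ) (v : EuclideanSpace ℝ (Fin n)) :
    mulVecE (-M) v = - mulVecE M v := by
  simp [mulVecE]

theorem mulVecE_add (M N : Matrix (Fin n) (Fin n) ℝ) (v : EuclideanSpace ℝ (Fin n)) :
    mulVecE (M + N) v = mulVecE M v + mulVecE N v := by
  simp [mulVecE]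

theorem mulVecE_vadd (M : Matrix (Fin n) (Fin n) ℝ) (v w : EuclideanSpace ℝ (Fin n)) :
    mulVecE M (v + w) = mulVecE M v + mulVecE M w := by
  simp [mulVecE]

theorem mulVecE_vsub (M : Matrix (Fin n) (Fin n) ℝ) (v w : EuclideanSpace ℝ (Fin n)) :
    mulVecE M (v - w) = mulVecE M v - mulVecE M w := by
  simp [mulVecE]

theorem mulVecE_vsmul (M : Matrix (Fin n) (Fin n) ℝ) (c : ℝ) (v : EuclideanSpace ℝ (Fin n)) :
    mulVecE M (c • v) = c • mulVecE M v := by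
  simp [mulVecE]

theorem mulVecE_cont {M : ℝ → Matrix (Fin n) (Fin n) ℝ} {v : ℝ → EuclideanSpace ℝ (Fin n)}
    (hM : Continuous M) (hv : Continuous v) : Continuous (fun t => mulVecE (M t) (v t)) := by
  have h1 : Continuous (fun t => (v t).ofLp) := (PiLp.continuous_ofLp 2 _).comp hv
  exact (PiLp.continuous_toLp 2 _).comp (hM.matrix_mulVec h1)

theorem mulVecE_hasDerivAt {M : ℝ → Matrix (Fin n) (Fin n) ℝ} {v : ℝ → EuclideanSpace ℝ (Fin n)}
    {M' : Matrix (Fin n) (Fin n) ℝ} {v' : EuclideanSpace ℝ (Fin n)} {t : ℝ}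
    (hM : ∀ i j, HasDerivAt (fun s => M s i j) (M' i j) t) (hv : HasDerivAt v v' t) :
    HasDerivAt (fun s => mulVecE (M s) (v s)) (mulVecE M' (v t) + mulVecE (M t) v') t := by
  have hvj : ∀ j, HasDerivAt (fun s => v s j) (v' j) t := fun j =>
    ((EuclideanSpace.proj (𝕜 := ℝ) j).hasFDerivAt.comp_hasDerivAt t hv)
  have h1 : HasDerivAt (fun s => (M s).mulVec (v s).ofLp)
      (fun i => ∑ j, (M' i j * v t j + M t i j * v' j)) t := by
    rw [hasDerivAt_pi]
    intro i
    exact HasDerivAt.fun_sum (u := Finset.univ) (A := fun j s => M s i j * v s j)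
      fun j _ => (hM i j).mul (hvj j)
  have h2 := ((EuclideanSpace.equiv (Fin n) ℝ).symm.toContinuousLinearMap.hasFDerivAt
    (x := (M t).mulVec (v t).ofLp)).comp_hasDerivAt t h1
  refine HasDerivAt.congr_deriv (f := fun s => mulVecE (M s) (v s)) h2 ?_
  ext i
  simp [mulVecE, Matrix.toLpLin_apply, Matrix.mulVec, dotProduct, Finset.sum_add_distrib]

theorem Phi_cont {A Φ : ℝ → Matrix (Fin n) (Fin n) ℝ} (hΦ : IsFundamentalMatrix A Φ) :
    Continuous Φ ∧ Continuous (fun t => (Φ t)⁻¹) := by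
  have h1 : Continuous Φ := continuous_matrix fun i j =>
    continuous_iff_continuousAt.2 fun t => (hΦ.2.2 t i j).continuousAt
  refine ⟨h1, ?_⟩
  simp only [Matrix.inv_def, Ring.inverse_eq_inv']
  refine Continuous.smul (Continuous.inv₀ h1.matrix_det fun t => ?_) h1.matrix_adjugate
  exact ((Matrix.isUnit_iff_isUnit_det _).1 (hΦ.2.1 t)).ne_zero

theorem exp_int {α : ℝ} (hα : 0 < α) : Integrable (fun s : ℝ => Real.exp (-α * |s|)) := by
  rw [← integrableOn_univ, ← Set.Iic_union_Ioi (a := (0 : ℝ))]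
  refine IntegrableOn.union ?_ ?_
  · refine (integrableOn_exp_mul_Iic hα 0).congr_fun (fun s hs => ?_) measurableSet_Iic
    simp only [abs_of_nonpos (Set.mem_Iic.1 hs)]
    ring_nf
  · refine (integrableOn_exp_mul_Ioi (neg_lt_zero.2 hα) 0).congr_fun (fun s hs => ?_)
      measurableSet_Ioi
    simp only [abs_of_pos (Set.mem_Ioi.1 hs)]

theorem green_bound {Φ : ℝ → Matrix (Fin n) (Fin n) ℝ} {P : Matrix (Fin n) (Fin n) ℝ} {α K : ℝ}
    (hdich : ExpDichotomy Φ α K P) (t s : ℝ) (v : EuclideanSpace ℝ (Fin n)) :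
    ‖mulVecE (GreenKernel Φ P t s) v‖ ≤ K * Real.exp (-α * |s - t|) * ‖v‖ := by
  unfold GreenKernel
  split_ifs with h
  · refine (mulVecE_norm_le _ _).trans (mul_le_mul_of_nonneg_right ?_ (norm_nonneg _))
    rw [abs_of_nonpos (by linarith), neg_sub]
    exact hdich.2.1 t s h
  · rw [mulVecE_neg, norm_neg]
    refine (mulVecE_norm_le _ _).trans (mul_le_mul_of_nonneg_right ?_ (norm_nonneg _))
    push Not at h
    rw [abs_of_pos (by linarith)]
    exact hdich.2.2 t s h

theorem green_meas {A Φ : ℝ → Matrix (Fin n) (Fin n) ℝ} {P : Matrix (Fin n) (Fin n) ℝ}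
    (hΦ : IsFundamentalMatrix A Φ)
    {f : ℝ → EuclideanSpace ℝ (Fin n)} (hf : Continuous f) (t : ℝ) :
    AEStronglyMeasurable (fun s => mulVecE (GreenKernel Φ P t s) (f s)) volume := by
  obtain ⟨h1, h2⟩ := Phi_cont hΦ
  have c1 : Continuous (fun s => mulVecE (Φ t * P * (Φ s)⁻¹) (f s)) :=
    mulVecE_cont (continuous_const.matrix_mul h2) hf
  have c2 : Continuous (fun s => mulVecE (-(Φ t * (1 - P) * (Φ s)⁻¹)) (f s)) :=
    mulVecE_cont (continuous_const.matrix_mul h2).neg hf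
  have : StronglyMeasurable (fun s => if s ≤ t then mulVecE (Φ t * P * (Φ s)⁻¹) (f s) else
      mulVecE (-(Φ t * (1 - P) * (Φ s)⁻¹)) (f s)) :=
    StronglyMeasurable.ite (measurableSet_Iic (a := t)) c1.stronglyMeasurable c2.stronglyMeasurable
  refine StronglyMeasurable.aestronglyMeasurable ?_
  convert this using 2 with s
  unfold GreenKernel
  by_cases h : s ≤ t <;> simp [h]

theorem green_dom {α K C : ℝ} (hα : 0 < α) (t : ℝ) :
    Integrable (fun s : ℝ => K * Real.exp (-α * |s - t|) * C) ∧
    ∫ s : ℝ, K * Real.exp (-α * |s - t|) * C = K * (∫ s : ℝ, Real.exp (-α * |s|)) * C := by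
  refine ⟨(((exp_int hα).comp_sub_right t).const_mul K).mul_const C, ?_⟩
  rw [integral_mul_const, integral_const_mul,
    integral_sub_right_eq_self (fun s : ℝ => Real.exp (-α * |s|)) t]

theorem green_integrable {A Φ : ℝ → Matrix (Fin n) (Fin n) ℝ} {P : Matrix (Fin n) (Fin n) ℝ}
    {α K : ℝ} (hα : 0 < α) (hK : 1 ≤ K)
    (hΦ : IsFundamentalMatrix A Φ) (hdich : ExpDichotomy Φ α K P)
    {f : ℝ → EuclideanSpace ℝ (Fin n)} (hf : Continuous f) {C : ℝ} (hC : ∀ s, ‖f s‖ ≤ C) (t : ℝ) :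
    Integrable (fun s => mulVecE (GreenKernel Φ P t s) (f s)) ∧
    ‖∫ s, mulVecE (GreenKernel Φ P t s) (f s)‖ ≤ K * (∫ s : ℝ, Real.exp (-α * |s|)) * C := by
  have hb : ∀ s, ‖mulVecE (GreenKernel Φ P t s) (f s)‖ ≤ K * Real.exp (-α * |s - t|) * C := by
    intro s
    refine (green_bound hdich t s (f s)).trans ?_
    exact mul_le_mul_of_nonneg_left (hC s) (by positivity)
  obtain ⟨h1, h2⟩ := green_dom (K := K) (C := C) hα t
  refine ⟨h1.mono' (green_meas hΦ hf t) (Eventually.of_forall hb), ?_⟩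
  rw [← h2]
  exact norm_integral_le_of_norm_le h1 (Eventually.of_forall hb)

theorem green_deriv {A Φ : ℝ → Matrix (Fin n) (Fin n) ℝ} {P : Matrix (Fin n) (Fin n) ℝ}
    {α K : ℝ} (hα : 0 < α) (hK : 1 ≤ K)
    (hΦ : IsFundamentalMatrix A Φ) (hdich : ExpDichotomy Φ α K P)
    {f : ℝ → EuclideanSpace ℝ (Fin n)} (hf : Continuous f) {C : ℝ} (hC : ∀ s, ‖f s‖ ≤ C) (t : ℝ) :
    HasDerivAt (fun t => ∫ s, mulVecE (GreenKernel Φ P t s) (f s))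
      (mulVecE (A t) (∫ s, mulVecE (GreenKernel Φ P t s) (f s)) + f t) t := by
  obtain ⟨hc1, hc2⟩ := Phi_cont hΦ
  have hinv : ∀ t, Φ t * (Φ t)⁻¹ = 1 := fun t =>
    Matrix.mul_nonsing_inv _ ((Matrix.isUnit_iff_isUnit_det _).1 (hΦ.2.1 t))
  have hinv' : ∀ t, (Φ t)⁻¹ * Φ t = 1 := fun t =>
    Matrix.nonsing_inv_mul _ ((Matrix.isUnit_iff_isUnit_det _).1 (hΦ.2.1 t))
  let L : Matrix (Fin n) (Fin n) ℝ → EuclideanSpace ℝ (Fin n) →L[ℝ] EuclideanSpace ℝ (Fin n) :=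
    fun M => LinearMap.toContinuousLinearMap (Matrix.toEuclideanLin M)
  have hL : ∀ M v, mulVecE M v = L M v := fun M v => rfl
  set F1 : ℝ → EuclideanSpace ℝ (Fin n) := fun s => mulVecE (P * (Φ s)⁻¹) (f s) with hF1
  set F2 : ℝ → EuclideanSpace ℝ (Fin n) := fun s => mulVecE ((1 - P) * (Φ s)⁻¹) (f s) with hF2
  have cF1 : Continuous F1 := mulVecE_cont (continuous_const.matrix_mul hc2) hf
  have cF2 : Continuous F2 := mulVecE_cont (continuous_const.matrix_mul hc2) hf
  have hG := fun t => (green_integrable hα hK hΦ hdich hf hC t).1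
  have e1 : ∀ t, ∀ s ∈ Set.Iic t, mulVecE (GreenKernel Φ P t s) (f s) = L (Φ t) (F1 s) := by
    intro t s hs
    rw [← hL, hF1, ← mulVecE_mul, ← mul_assoc]
    simp [GreenKernel, Set.mem_Iic.1 hs]
  have e2 : ∀ t, ∀ s ∈ Set.Ioi t, mulVecE (GreenKernel Φ P t s) (f s) = - L (Φ t) (F2 s) := by
    intro t s hs
    rw [← hL, hF2, ← mulVecE_mul, ← mul_assoc, ← mulVecE_neg]
    simp [GreenKernel, not_le.2 (Set.mem_Ioi.1 hs)]
  have hback : ∀ t v, L (Φ t)⁻¹ (L (Φ t) v) = v := by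
    intro t v
    rw [← hL, ← hL, ← mulVecE_mul, hinv', mulVecE_one]
  have i1 : ∀ t, IntegrableOn F1 (Set.Iic t) := by
    intro t
    have := ((hG t).integrableOn (s := Set.Iic t)).congr_fun (e1 t) measurableSet_Iic
    have h2 := (L (Φ t)⁻¹).integrable_comp this
    simp only [hback] at h2
    exact h2
  have i2 : ∀ t, IntegrableOn F2 (Set.Ioi t) := by
    intro t
    have := (((hG t).integrableOn (s := Set.Ioi t)).congr_fun (e2 t) measurableSet_Ioi).neg
    have h2 := (L (Φ t)⁻¹).integrable_comp this
    simp only [Pi.neg_apply, neg_neg, hback] at h2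
    exact h2
  have hz : ∀ t, ∫ s, mulVecE (GreenKernel Φ P t s) (f s) =
      mulVecE (Φ t) ((∫ s in Set.Iic 0, F1 s) - (∫ s in Set.Ioi 0, F2 s) +
        ∫ s in (0 : ℝ)..t, (F1 s + F2 s)) := by
    intro t
    rw [← integral_add_compl (measurableSet_Iic (a := t)) (hG t), Set.compl_Iic,
      setIntegral_congr_fun measurableSet_Iic (e1 t),
      setIntegral_congr_fun measurableSet_Ioi (e2 t), integral_neg,
      ContinuousLinearMap.integral_comp_comm _ (i1 t),
      ContinuousLinearMap.integral_comp_comm _ (i2 t), ← sub_eq_add_neg, ← map_sub, hL]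
    congr 1
    rw [intervalIntegral.integral_add (cF1.intervalIntegrable _ _) (cF2.intervalIntegrable _ _),
      ← intervalIntegral.integral_Iic_sub_Iic (i1 0) (i1 t),
      ← intervalIntegral.integral_Ioi_sub_Ioi' (i2 0) (i2 t)]
    abel
  have hfe : (fun t => ∫ s, mulVecE (GreenKernel Φ P t s) (f s)) = fun t =>
      mulVecE (Φ t) ((∫ s in Set.Iic 0, F1 s) - (∫ s in Set.Ioi 0, F2 s) +
        ∫ s in (0 : ℝ)..t, (F1 s + F2 s)) := funext hz
  rw [hfe, hz t]
  have hd := ((cF1.add cF2).integral_hasStrictDerivAt 0 t).hasDerivAt.const_add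
    ((∫ s in Set.Iic 0, F1 s) - (∫ s in Set.Ioi 0, F2 s))
  have := mulVecE_hasDerivAt (hΦ.2.2 t) hd
  rw [mulVecE_mul] at this
  refine this.congr_deriv ?_
  congr 1
  rw [Pi.add_apply]
  simp only [hF1, hF2]
  rw [← mulVecE_add, ← add_mul, add_sub_cancel, one_mul, ← mulVecE_mul, hinv, mulVecE_one]

end green

/-- Theorem: RAP solutions of the delayed system
`y'(t) = A(t)y(t) + h(t) + ν·g(t, y(t), y(t-a))`. -/
theorem exists_unique_RAP_solution_delayed_linear {n : ℕ}
    (A Φ : ℝ → Matrix (Fin n) (Fin n) ℝ)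
    (P : Matrix (Fin n) (Fin n) ℝ) (α K : ℝ)
    (h : ℝ → EuclideanSpace ℝ (Fin n))
    (ξ : ℝ → EuclideanSpace ℝ (Fin n))
    (a : ℝ) (ha : 0 < a)
    (g : ℝ → EuclideanSpace ℝ (Fin n) → EuclideanSpace ℝ (Fin n) →
      EuclideanSpace ℝ (Fin n))
    (M₁ : ℝ → ℝ)
    (hα : 0 < α) (hK : 1 ≤ K)
    (hARAP : RAPMatrix A)
    (hΦ : IsFundamentalMatrix A Φ)
    (hdich : ExpDichotomy Φ α K P)
    (hGreen : RAPIntegralProperty (GreenKernel Φ P))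
    (hhRAP : RAP h)
    (hξRAP : RAP ξ)
    (hξsol : ∀ t, HasDerivAt ξ (mulVecE (A t) (ξ t) + h t) t)
    (hξuniq : ∀ η : ℝ → EuclideanSpace ℝ (Fin n), RAP η →
      (∀ t, HasDerivAt η (mulVecE (A t) (η t) + h t) t) → η = ξ)
    (hgbdd : ∃ C, ∀ t : ℝ, ∀ x y : EuclideanSpace ℝ (Fin n), ‖g t x y‖ ≤ C)
    (hgRAP : ∀ S : Set (EuclideanSpace ℝ (Fin n) × EuclideanSpace ℝ (Fin n)),
      Bornology.IsBounded S → RAPUniform (fun t p => g t p.1 p.2) S)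
    (hglip : ∀ r > 0, ∀ t : ℝ, ∀ x y z v : EuclideanSpace ℝ (Fin n),
      ‖x‖ ≤ r → ‖y‖ ≤ r → ‖z‖ ≤ r → ‖v‖ ≤ r →
      ‖g t x y - g t z v‖ ≤ M₁ r * (‖x - z‖ + ‖y - v‖)) :
    ∀ r > 0, ∃ ν₀ > 0,
      (∀ ν ∈ Set.Icc (0:ℝ) ν₀,
        ∃! ψ : ℝ → EuclideanSpace ℝ (Fin n),
          RAP ψ ∧
          (∀ t, HasDerivAt ψ
            (mulVecE (A t) (ψ t) + h t + ν • g t (ψ t) (ψ (t - a))) t) ∧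
          ∀ t, ‖ψ t - ξ t‖ ≤ r) ∧
      (∀ ψ : ℝ → ℝ → EuclideanSpace ℝ (Fin n),
        (∀ ν ∈ Set.Icc (0:ℝ) ν₀, RAP (ψ ν) ∧
          (∀ t, HasDerivAt (ψ ν)
            (mulVecE (A t) (ψ ν t) + h t + ν • g t (ψ ν t) (ψ ν (t - a))) t) ∧
          ∀ t, ‖ψ ν t - ξ t‖ ≤ r) →
        ∀ t, Filter.Tendsto (fun ν => ψ ν t)
          (nhdsWithin 0 (Set.Ioc 0 ν₀)) (nhds (ξ t))) := by
  intro r hr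
  obtain ⟨C0, hC0⟩ := hgbdd
  obtain ⟨X, hX⟩ := hξRAP.1
  set J : ℝ := ∫ s : ℝ, Real.exp (-α * |s|) with hJ
  have hJ0 : 0 ≤ J := integral_nonneg fun s => (Real.exp_pos _).le
  set R : ℝ := |X| + r with hR
  have hR0 : 0 < R := by positivity
  set M : ℝ := M₁ R with hM
  set C : ℝ := |C0| with hC
  have hCb : ∀ t x y, ‖g t x y‖ ≤ C := fun t x y => (hC0 t x y).trans (le_abs_self _)
  have hC00 : 0 ≤ C := abs_nonneg _
  set B : ℝ := K * J * (C + 4 * |M|) with hB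
  have hKJ : 0 ≤ K * J := mul_nonneg (by linarith) hJ0
  have hB0 : 0 ≤ B := mul_nonneg hKJ (by positivity)
  have hin : ∀ ψ : ℝ → EuclideanSpace ℝ (Fin n), (∀ t, ‖ψ t - ξ t‖ ≤ r) → ∀ t, ‖ψ t‖ ≤ R := by
    intro ψ h t
    have := norm_add_le (ψ t - ξ t) (ξ t)
    rw [sub_add_cancel] at this
    linarith [h t, (hX t).trans (le_abs_self X)]
  set Z : (ℝ → EuclideanSpace ℝ (Fin n)) → ℝ → EuclideanSpace ℝ (Fin n) := fun ψ t =>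
    ∫ s, mulVecE (GreenKernel Φ P t s) (g s (ψ s) (ψ (s - a))) with hZ
  have fA : ∀ ψ : ℝ → EuclideanSpace ℝ (Fin n), RAP ψ → (∀ t, ‖ψ t - ξ t‖ ≤ r) →
      RAP (fun t => g t (ψ t) (ψ (t - a))) := fun ψ h1 h2 =>
    RAP_comp (hgRAP _ isBounded_closedBall) (hglip R hR0) h1 (hin ψ h2)
  have fB : ∀ ψ : ℝ → EuclideanSpace ℝ (Fin n), RAP ψ → (∀ t, ‖ψ t - ξ t‖ ≤ r) →
      RAP (Z ψ) ∧ (∀ t, ‖Z ψ t‖ ≤ K * J * C) ∧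
      ∀ t, HasDerivAt (Z ψ) (mulVecE (A t) (Z ψ t) + g t (ψ t) (ψ (t - a))) t := by
    intro ψ h1 h2
    have h3 := fA ψ h1 h2
    refine ⟨hGreen _ h3, fun t => ?_, fun t => ?_⟩
    · exact (green_integrable hα hK hΦ hdich h3.2.1.continuous (fun s => hCb _ _ _) t).2
    · exact green_deriv hα hK hΦ hdich h3.2.1.continuous (fun s => hCb _ _ _) t
  have fC : ∀ ν : ℝ, ∀ ψ : ℝ → EuclideanSpace ℝ (Fin n), RAP ψ → (∀ t, ‖ψ t - ξ t‖ ≤ r) →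
      (∀ t, HasDerivAt ψ (mulVecE (A t) (ψ t) + h t + ν • g t (ψ t) (ψ (t - a))) t) →
      ∀ t, ψ t = ξ t + ν • Z ψ t := by
    intro ν ψ h1 h2 h3 t
    obtain ⟨b1, -, b3⟩ := fB ψ h1 h2
    have := hξuniq (fun t => ψ t - ν • Z ψ t) (h1.sub' (b1.smul' ν)) (fun t => by
      refine ((h3 t).sub ((b3 t).const_smul ν)).congr_deriv ?_
      rw [mulVecE_vsub, mulVecE_vsmul, smul_add]
      abel)
    rw [← this]
    simp
  have fD : ∀ ψ φ : ℝ → EuclideanSpace ℝ (Fin n), RAP ψ → (∀ t, ‖ψ t - ξ t‖ ≤ r) →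
      RAP φ → (∀ t, ‖φ t - ξ t‖ ≤ r) → ∀ d, (∀ t, ‖ψ t - φ t‖ ≤ d) →
      ∀ t, ‖Z ψ t - Z φ t‖ ≤ K * J * (|M| * (2 * d)) := by
    intro ψ φ h1 h2 h3 h4 d hd t
    have c1 := (fA ψ h1 h2).2.1.continuous
    have c2 := (fA φ h3 h4).2.1.continuous
    have e : Z ψ t - Z φ t = ∫ s, mulVecE (GreenKernel Φ P t s)
        (g s (ψ s) (ψ (s - a)) - g s (φ s) (φ (s - a))) := by
      simp only [hZ, mulVecE_vsub]
      rw [integral_sub]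
      · exact (green_integrable hα hK hΦ hdich c1 (fun s => hCb _ _ _) t).1
      · exact (green_integrable hα hK hΦ hdich c2 (fun s => hCb _ _ _) t).1
    rw [e]
    refine (green_integrable hα hK hΦ hdich (c1.sub c2) (fun s => ?_) t).2
    refine (hglip R hR0 s _ _ _ _ (hin ψ h2 _) (hin ψ h2 _) (hin φ h4 _) (hin φ h4 _)).trans ?_
    refine (mul_le_mul_of_nonneg_right (le_abs_self M) (by positivity)).trans ?_
    exact mul_le_mul_of_nonneg_left (by linarith [hd s, hd (s - a)]) (abs_nonneg M)
  set m : ℝ := min r (1 / 2) with hm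
  have hm0 : 0 < m := lt_min hr (by norm_num)
  have hνB : ∀ ν ∈ Set.Icc (0 : ℝ) (m / (1 + B)), ν * (K * J * C) ≤ r ∧
      ∀ d, 0 ≤ d → ν * (K * J * (|M| * (2 * d))) ≤ d / 2 := by
    rintro ν ⟨hν0, hν1⟩
    rw [le_div_iff₀ (by positivity)] at hν1
    have h1 : m ≤ r := min_le_left _ _
    have h2 : m ≤ 1 / 2 := min_le_right _ _
    have h3 : 0 ≤ ν * (K * J * C) := by positivity
    have h4 : 0 ≤ ν * (K * J * |M|) := by positivity
    have h5 : ν * B = ν * (K * J * C) + 4 * (ν * (K * J * |M|)) := by rw [hB]; ring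
    refine ⟨by nlinarith, fun d hd => ?_⟩
    have h6 : ν * (K * J * |M|) * 4 ≤ 1 / 2 := by nlinarith
    have h7 : ν * (K * J * (|M| * (2 * d))) = (ν * (K * J * |M|)) * 2 * d := by ring
    rw [h7]
    nlinarith
  refine ⟨m / (1 + B), by positivity, fun ν hν => ?_, fun ψ hψ t => ?_⟩
  · obtain ⟨hν1, hν2⟩ := hνB ν hν
    let S : Set (BoundedContinuousFunction ℝ (EuclideanSpace ℝ (Fin n))) :=
      {φ | RAP φ ∧ ∀ t, ‖φ t - ξ t‖ ≤ r}
    have hSc : IsClosed S := by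
      refine isClosed_of_closure_subset fun φ hφ => ?_
      rw [Metric.mem_closure_iff] at hφ
      have hφ' : ∀ ε > 0, ∃ b ∈ S, ∀ t, ‖φ t - b t‖ ≤ ε := by
        intro ε hε
        obtain ⟨b, hb, hd⟩ := hφ ε hε
        refine ⟨b, hb, fun t => ?_⟩
        rw [← dist_eq_norm]
        exact (BoundedContinuousFunction.dist_coe_le_dist t).trans hd.le
      refine ⟨RAP.limit' fun ε hε => ?_, fun t => le_of_forall_pos_le_add fun ε hε => ?_⟩
      · obtain ⟨b, hb, hd⟩ := hφ' ε hε
        exact ⟨b, hb.1, hd⟩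
      · obtain ⟨b, hb, hd⟩ := hφ' ε hε
        have := norm_add_le (φ t - b t) (b t - ξ t)
        rw [sub_add_sub_cancel] at this
        linarith [hd t, hb.2 t]
    have hT : ∀ φ : S, ∃ φ' : S, ∀ t, φ'.1 t = ξ t + ν • Z φ.1 t := by
      rintro ⟨φ, h1, h2⟩
      obtain ⟨b1, b2, -⟩ := fB φ h1 h2
      have h3 : RAP (fun t => ξ t + ν • Z φ t) := hξRAP.add' (b1.smul' ν)
      obtain ⟨D, hD⟩ := h3.1
      refine ⟨⟨BoundedContinuousFunction.ofNormedAddCommGroup _ h3.2.1.continuous D hD, h3,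
        fun t => ?_⟩, fun t => rfl⟩
      change ‖ξ t + ν • Z φ t - ξ t‖ ≤ r
      rw [add_sub_cancel_left, norm_smul, Real.norm_eq_abs, abs_of_nonneg hν.1]
      exact (mul_le_mul_of_nonneg_left (b2 t) hν.1).trans hν1
    choose T hTs using hT
    have hcomp : CompleteSpace S := hSc.completeSpace_coe
    have hξS : ∃ φ : S, ∀ t, φ.1 t = ξ t := by
      refine ⟨⟨BoundedContinuousFunction.ofNormedAddCommGroup ξ hξRAP.2.1.continuous X hX, hξRAP,
        fun t => ?_⟩, fun t => rfl⟩
      change ‖ξ t - ξ t‖ ≤ r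
      simpa using hr.le
    have key : ∀ ψ φ : ℝ → EuclideanSpace ℝ (Fin n), RAP ψ → (∀ t, ‖ψ t - ξ t‖ ≤ r) →
        RAP φ → (∀ t, ‖φ t - ξ t‖ ≤ r) → ∀ d, (∀ t, ‖ψ t - φ t‖ ≤ d) →
        ∀ t, ‖(ξ t + ν • Z ψ t) - (ξ t + ν • Z φ t)‖ ≤ d / 2 := by
      intro ψ φ h1 h2 h3 h4 d hd t
      rw [add_sub_add_left_eq_sub, ← smul_sub, norm_smul, Real.norm_eq_abs, abs_of_nonneg hν.1]
      exact (mul_le_mul_of_nonneg_left (fD ψ φ h1 h2 h3 h4 d hd t) hν.1).trans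
        (hν2 d ((norm_nonneg _).trans (hd 0)))
    have hcontr : ContractingWith (1 / 2) T := by
      refine ⟨by rw [← NNReal.coe_lt_coe]; norm_num, LipschitzWith.of_dist_le_mul fun x y => ?_⟩
      change dist (T x).1 (T y).1 ≤ _ * dist x.1 y.1
      rw [BoundedContinuousFunction.dist_le (by positivity)]
      intro t
      rw [hTs, hTs, dist_eq_norm]
      refine (key x.1 y.1 x.2.1 x.2.2 y.2.1 y.2.2 (dist x.1 y.1) (fun t => ?_) t).trans ?_
      · rw [← dist_eq_norm]
        exact BoundedContinuousFunction.dist_coe_le_dist t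
      · push_cast
        linarith
    obtain ⟨φ0, -⟩ := hξS
    obtain ⟨y, hy, -, -⟩ := hcontr.exists_fixedPoint φ0 (edist_ne_top _ _)
    have hy' : ∀ t, y.1 t = ξ t + ν • Z y.1 t := by
      intro t
      rw [← hTs y t, hy.eq]
    refine ⟨y.1, ⟨y.2.1, fun t => ?_, y.2.2⟩, ?_⟩
    · obtain ⟨-, -, b3⟩ := fB y.1 y.2.1 y.2.2
      have e : (y.1 : ℝ → EuclideanSpace ℝ (Fin n)) = fun t => ξ t + ν • Z y.1 t := funext hy'
      have h5 := (hξsol t).add ((b3 t).const_smul ν)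
      have h6 : HasDerivAt (y.1 : ℝ → EuclideanSpace ℝ (Fin n)) _ t :=
        h5.congr_of_eventuallyEq (Eventually.of_forall hy')
      refine h6.congr_deriv ?_
      rw [smul_add, ← mulVecE_vsmul]
      conv_rhs => rw [hy' t, mulVecE_vadd, ← hy' t]
      abel
    · rintro ψ ⟨h1, h2, h3⟩
      have hψe := fC ν ψ h1 h3 h2
      have hb : ∀ t, ‖ψ t - y.1 t‖ ≤ R + R := fun t =>
        (norm_sub_le _ _).trans (add_le_add (hin ψ h3 t) (hin y.1 y.2.2 t))
      have hbdd : BddAbove (Set.range fun t => ‖ψ t - y.1 t‖) := by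
        refine ⟨R + R, ?_⟩
        rintro _ ⟨t, rfl⟩
        exact hb t
      set d := ⨆ t, ‖ψ t - y.1 t‖ with hd
      have hle : ∀ t, ‖ψ t - y.1 t‖ ≤ d := fun t => le_ciSup hbdd t
      have h4 : d ≤ d / 2 := by
        refine ciSup_le fun t => ?_
        rw [hψe t, hy' t]
        exact key ψ y.1 h1 h3 y.2.1 y.2.2 d hle t
      funext t
      have h5 := hle t
      have h6 := norm_nonneg (ψ t - y.1 t)
      exact sub_eq_zero.1 (norm_eq_zero.1 (by linarith))
  · rw [tendsto_iff_norm_sub_tendsto_zero]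
    have hlim : Tendsto (fun ν : ℝ => ν * (K * J * C))
        (nhdsWithin 0 (Set.Ioc 0 (m / (1 + B)))) (nhds 0) := by
      have : Tendsto (fun ν : ℝ => ν * (K * J * C)) (nhds 0) (nhds (0 * (K * J * C))) :=
        (continuous_id.mul continuous_const).tendsto 0
      rw [zero_mul] at this
      exact this.mono_left nhdsWithin_le_nhds
    refine squeeze_zero' (Eventually.of_forall fun ν => norm_nonneg _) ?_ hlim
    filter_upwards [self_mem_nhdsWithin] with ν hν
    obtain ⟨h1, h2, h3⟩ := hψ ν ⟨hν.1.le, hν.2⟩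
    rw [fC ν (ψ ν) h1 h3 h2 t, add_sub_cancel_left, norm_smul, Real.norm_eq_abs,
      abs_of_nonneg hν.1.le]
    exact mul_le_mul_of_nonneg_left ((fB (ψ ν) h1 h3).2.1 t) hν.1.le
end

section
/- Let f : ℝ × ℝⁿ → ℝⁿ be RAP in t uniformly with respect to x in compact sets, C² in x with second-order partial derivatives locally Lipschitz in x uniformly in t, and let ξ be the unique RAP solution of z' = f(t,z). Assume the variational system z' = (∂f/∂x)(t,ξ(t))·z has RAP coefficient matrix, possesses an (α,K,P)-exponential dichotomy, and its Green kernel has the RAP-integral property. Fix a delay a > 0 and let g : ℝ × ℝⁿ × ℝⁿ → ℝⁿ be bounded, RAP in t uniformly with respect to (x,z) in bounded sets, uniformly continuous there, and Lipschitz: ‖g(t,x,y) − g(t,z,v)‖ ≤ M₁(r)(‖x−z‖ + ‖y−v‖) for ‖x‖,‖y‖,‖z‖,‖v‖ ≤ r. Then there exist r > 0 and ν₀ = ν₀(r) > 0 such that for every ν ∈ [0,ν₀] the system y'(t) = f(t,y(t)) + ν·g(t, y(t), y(t−a)) has exactly one RAP solution ψ_ν with sup_{t∈ℝ} ‖ψ_ν(t)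 − ξ(t)‖ ≤ r, and ψ_ν(t) → ξ(t) for every t ∈ ℝ as ν → 0⁺. -/
open MeasureTheory Filter Metric

namespace RAPaux

def TS {ι Y : Type*} [NormedAddCommGroup Y] (F : ℝ → ι → Y) (ε : ℝ) : Set ℝ :=
  {τ | ∀ᶠ t in cocompact ℝ, ∀ i, ‖F (t + τ) i - F t i‖ ≤ ε}

lemma tendsto_shift (c : ℝ) : Tendsto (fun t : ℝ => t + c) (cocompact ℝ) (cocompact ℝ) :=
  (Homeomorph.addRight c).isClosedEmbedding.tendsto_cocompact

lemma TS_sub {ι Y : Type*} [NormedAddCommGroup Y] (F : ℝ → ι → Y) (ε : ℝ) (τ : ℝ)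
    (hτ : τ ∈ TS F ε) (σ : ℝ) (hσ : σ ∈ TS F ε) : τ - σ ∈ TS F (2 * ε) := by
  have h1 := (tendsto_shift (-σ)).eventually hτ
  have h2 := (tendsto_shift (-σ)).eventually hσ
  show ∀ᶠ t in cocompact ℝ, _
  filter_upwards [h1, h2] with t h1 h2 i
  have a1 := h1 i
  have a2 := h2 i
  rw [show t + -σ + τ = t + (τ - σ) by ring] at a1
  rw [show t + -σ + σ = t by ring] at a2
  calc ‖F (t + (τ - σ)) i - F t i‖
      = ‖(F (t + (τ - σ)) i - F (t + -σ) i) - (F t i - F (t + -σ) i)‖ := by congr 1; abel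
    _ ≤ _ := norm_sub_le _ _
    _ ≤ 2 * ε := by linarith

lemma TS_mono {ι Y : Type*} [NormedAddCommGroup Y] (F : ℝ → ι → Y) {ε ε' : ℝ} (h : ε ≤ ε') :
    TS F ε ⊆ TS F ε' := by
  intro τ hτ
  show ∀ᶠ t in cocompact ℝ, _
  filter_upwards [hτ] with t ht i using (ht i).trans h

lemma RelDense_mono {S T : Set ℝ} (h : S ⊆ T) (hS : RelativelyDense S) : RelativelyDense T := by
  obtain ⟨l, hl, H⟩ := hS
  refine ⟨l, hl, fun a => ?_⟩
  obtain ⟨τ, h1, h2⟩ := H a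
  exact ⟨τ, h h1, h2⟩

lemma relDense_inter (P Q : ℝ → Set ℝ)
    (hP : ∀ ε, ∀ τ ∈ P ε, ∀ σ ∈ P ε, τ - σ ∈ P (2 * ε))
    (hQ : ∀ ε, ∀ τ ∈ Q ε, ∀ σ ∈ Q ε, τ - σ ∈ Q (2 * ε))
    (hQ0 : ∀ ε > 0, ∃ δ > 0, ∀ τ : ℝ, |τ| < δ → τ ∈ Q ε)
    (hPd : ∀ ε > 0, RelativelyDense (P ε)) (hQd : ∀ ε > 0, RelativelyDense (Q ε)) :
    ∀ ε > 0, RelativelyDense (P ε ∩ Q ε) := by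
  intro ε hε
  obtain ⟨l, hl, H1⟩ := hPd (ε / 2) (by positivity)
  obtain ⟨l', hl', H2⟩ := hQd (ε / 4) (by positivity)
  obtain ⟨δ, hδ, H3⟩ := hQ0 (ε / 2) (by positivity)
  choose τ hτ hτ' using H1
  choose σ hσ hσ' using H2
  set D : ℝ → ℝ := fun b => τ b - σ b with hD
  have htb : TotallyBounded (Set.range D) := by
    refine (isCompact_Icc (a := -(l + l')) (b := l + l')).totallyBounded.subset ?_
    rintro _ ⟨b, rfl⟩
    have h1 := hτ' b
    have h2 := hσ' b
    simp only [Set.mem_Icc, hD] at *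
    constructor <;> linarith
  obtain ⟨t, hts, htf, hcov⟩ := Metric.finite_approx_of_totallyBounded htb δ hδ
  have : ∀ y : ℝ, ∃ b, y ∈ t → D b = y := by
    intro y
    by_cases hy : y ∈ t
    · obtain ⟨b, hb⟩ := hts hy
      exact ⟨b, fun _ => hb⟩
    · exact ⟨0, fun h => absurd h hy⟩
  choose c hc using this
  obtain ⟨B, hB⟩ := ((htf.image (fun y => τ (c y))).isBounded).exists_norm_le
  have hB' : ∀ y ∈ t, |τ (c y)| ≤ |B| := fun y hy =>
    (hB _ ⟨y, hy, rfl⟩).trans (le_abs_self B)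
  refine ⟨2 * |B| + l, by positivity, fun a => ?_⟩
  set b := a + |B| with hb
  have hDb : D b ∈ ⋃ y ∈ t, ball y δ := hcov ⟨b, rfl⟩
  simp only [Set.mem_iUnion] at hDb
  obtain ⟨y, hy, hyb⟩ := hDb
  refine ⟨τ b - τ (c y), ⟨?_, ?_⟩, ?_⟩
  · have := hP _ _ (hτ b) _ (hτ (c y))
    rwa [show 2 * (ε / 2) = ε by ring] at this
  · have h1 := hQ _ _ (hσ b) _ (hσ (c y))
    rw [show 2 * (ε / 4) = ε / 2 by ring] at h1
    have h2 : -(D b - D (c y)) ∈ Q (ε / 2) := by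
      apply H3
      rw [abs_neg, hc y hy]
      exact hyb
    have h3 := hQ _ _ h1 _ h2
    rw [show 2 * (ε / 2) = ε by ring] at h3
    convert h3 using 1
    simp only [hD]; ring
  · have h1 := hτ' b
    have h2 := abs_le.1 (hB' y hy)
    simp only [Set.mem_Icc] at *
    constructor <;> linarith

section
variable {X Y : Type*} [NormedAddCommGroup X] [NormedAddCommGroup Y]

lemma RAP.TSd {u : ℝ → X} (hu : RAP u) :
    ∀ ε > 0, RelativelyDense (TS (fun t (_ : Unit) => u t) ε) := by
  intro ε hε
  obtain ⟨⟨C, hC⟩, -, h⟩ := hu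
  refine RelDense_mono ?_ (h ε hε)
  intro τ hτ
  have hb : IsBoundedUnder (· ≤ ·) (cocompact ℝ) (fun t => ‖u (t + τ) - u t‖) := by
    refine isBoundedUnder_of ⟨C + C, fun t => (norm_sub_le _ _).trans (add_le_add (hC _) (hC _))⟩
  have hτ' : Filter.limsup (fun t => ‖u (t + τ) - u t‖) (Filter.cocompact ℝ) < ε := hτ
  have := eventually_lt_of_limsup_lt hτ' hb
  show ∀ᶠ t in cocompact ℝ, _
  filter_upwards [this] with t ht _ using ht.le

lemma RAP_mk {u : ℝ → X} (hb : ∃ C, ∀ t, ‖u t‖ ≤ C) (huc : UniformContinuous u)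
    (h : ∀ ε > 0, RelativelyDense (TS (fun t (_ : Unit) => u t) ε)) : RAP u := by
  refine ⟨hb, huc, fun ε hε => RelDense_mono ?_ (h (ε / 2) (by positivity))⟩
  intro τ hτ
  refine lt_of_le_of_lt (b := ε / 2) ?_ (by linarith)
  refine limsup_le_of_le ?_ ?_
  · refine IsBoundedUnder.isCoboundedUnder_le ?_
    exact isBoundedUnder_of ⟨0, fun t => norm_nonneg _⟩
  · filter_upwards [hτ] with t ht using ht ()

lemma TS_zero {u : ℝ → X} (hu : UniformContinuous u) :
    ∀ ε > 0, ∃ δ > 0, ∀ τ : ℝ, |τ| < δ → τ ∈ TS (fun t (_ : Unit) => u t) ε := by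
  intro ε hε
  obtain ⟨δ, hδ, H⟩ := Metric.uniformContinuous_iff.1 hu ε hε
  refine ⟨δ, hδ, fun τ hτ => Eventually.of_forall fun t _ => ?_⟩
  have := @H (t + τ) t (by rw [Real.dist_eq]; simpa using hτ)
  rw [dist_eq_norm] at this
  exact this.le

lemma RAPUniform.TSd {F : ℝ → X → Y} {S : Set X} (hF : RAPUniform F S) :
    ∀ ε > 0, RelativelyDense (TS (fun t (x : S) => F t x) ε) := by
  intro ε hε
  obtain ⟨⟨C, hC⟩, -, h⟩ := hF
  refine RelDense_mono ?_ (h ε hε)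
  intro τ hτ
  have hin : ∀ t, ∀ x : X, (⨆ (_ : x ∈ S), ‖F (t + τ) x - F t x‖) ≤ |C| + |C| := by
    intro t x
    by_cases hx : x ∈ S
    · rw [ciSup_pos hx]
      exact (norm_sub_le _ _).trans (add_le_add ((hC _ _ hx).trans (le_abs_self _))
        ((hC _ _ hx).trans (le_abs_self _)))
    · have : IsEmpty (x ∈ S) := ⟨hx⟩
      rw [Real.iSup_of_isEmpty]; positivity
  have hb : IsBoundedUnder (· ≤ ·) (cocompact ℝ)
      (fun t => ⨆ x ∈ S, ‖F (t + τ) x - F t x‖) := by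
    refine isBoundedUnder_of ⟨|C| + |C|, fun t => ?_⟩
    exact ciSup_le (hin t)
  have hτ' : Filter.limsup (fun t => ⨆ x ∈ S, ‖F (t + τ) x - F t x‖) (Filter.cocompact ℝ) < ε := hτ
  have := eventually_lt_of_limsup_lt hτ' hb
  show ∀ᶠ t in cocompact ℝ, _
  filter_upwards [this] with t ht x
  refine le_trans ?_ ht.le
  have h2 := le_ciSup (f := fun x : X => ⨆ (_ : x ∈ S), ‖F (t + τ) x - F t x‖)
    ⟨|C| + |C|, by rintro _ ⟨x, rfl⟩; exact hin t x⟩ x.1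
  rw [ciSup_pos x.2] at h2
  exact h2

lemma RAP.comp {F : ℝ → X → Y} {S : Set X} (hF : RAPUniform F S) {u : ℝ → X} (hu : RAP u)
    (huS : ∀ t, u t ∈ S) : RAP (fun t => F t (u t)) := by
  have hUC := Metric.uniformContinuousOn_iff.1 hF.2.1
  refine RAP_mk ?_ ?_ ?_
  · obtain ⟨C, hC⟩ := hF.1
    exact ⟨C, fun t => hC t _ (huS t)⟩
  · rw [Metric.uniformContinuous_iff]
    intro ε hε
    obtain ⟨δ, hδ, H⟩ := hUC ε hε
    obtain ⟨δ', hδ', H'⟩ := Metric.uniformContinuous_iff.1 hu.2.1 δ hδ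
    refine ⟨min δ δ', lt_min hδ hδ', fun {s t} hst => ?_⟩
    refine H (s, u s) ⟨trivial, huS s⟩ (t, u t) ⟨trivial, huS t⟩ ?_
    rw [Prod.dist_eq]
    exact max_lt (hst.trans_le (min_le_left _ _)) (H' (hst.trans_le (min_le_right _ _)))
  · intro ε hε
    obtain ⟨δ, hδ, H⟩ := hUC (ε / 2) (by positivity)
    have h := relDense_inter _ _ (TS_sub _) (TS_sub _) (TS_zero hu.2.1) (RAPUniform.TSd hF)
      (RAP.TSd hu) (min (ε / 2) (δ / 2)) (by positivity)
    refine RelDense_mono ?_ h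
    rintro τ ⟨h1, h2⟩
    show ∀ᶠ t in cocompact ℝ, _
    filter_upwards [h1, h2] with t h1 h2 _
    have a1 := (h1 ⟨u (t + τ), huS _⟩).trans (min_le_left _ _)
    have a2 := (h2 ()).trans (min_le_right _ _)
    have a3 := H (t, u (t + τ)) ⟨trivial, huS _⟩ (t, u t) ⟨trivial, huS _⟩ (by
      rw [Prod.dist_eq, dist_self, dist_eq_norm]
      exact max_lt hδ (by simp only; linarith))
    rw [dist_eq_norm] at a3
    simp only at a1 a3
    calc _ = ‖(F (t + τ) (u (t + τ)) - F t (u (t + τ))) + (F t (u (t + τ)) - F t (u t))‖ := by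
            congr 1; abel
      _ ≤ _ := norm_add_le _ _
      _ ≤ ε := by linarith

lemma RAP.prod {u : ℝ → X} {v : ℝ → Y} (hu : RAP u) (hv : RAP v) :
    RAP (fun t => (u t, v t)) := by
  refine RAP_mk ?_ (hu.2.1.prodMk hv.2.1) ?_
  · obtain ⟨C, hC⟩ := hu.1
    obtain ⟨C', hC'⟩ := hv.1
    exact ⟨max C C', fun t => max_le_max (hC t) (hC' t)⟩
  · intro ε hε
    refine RelDense_mono ?_ (relDense_inter _ _ (TS_sub _) (TS_sub _) (TS_zero hv.2.1)
      (RAP.TSd hu) (RAP.TSd hv) ε hε)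
    rintro τ ⟨h1, h2⟩
    show ∀ᶠ t in cocompact ℝ, _
    filter_upwards [h1, h2] with t h1 h2 _
    exact max_le (h1 ()) (h2 ())

lemma RAP.clm [NormedSpace ℝ X] [NormedSpace ℝ Y] (L : X →L[ℝ] Y) {u : ℝ → X} (hu : RAP u) :
    RAP (fun t => L (u t)) := by
  refine RAP_mk ?_ (L.uniformContinuous.comp hu.2.1) ?_
  · obtain ⟨C, hC⟩ := hu.1
    exact ⟨‖L‖ * C, fun t => (L.le_opNorm _).trans (by gcongr; exact hC t)⟩
  · intro ε hε
    refine RelDense_mono ?_ (RAP.TSd hu (ε / (‖L‖ + 1)) (by positivity))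
    intro τ h1
    show ∀ᶠ t in cocompact ℝ, _
    filter_upwards [h1] with t h1 _
    rw [← map_sub]
    calc _ ≤ ‖L‖ * ‖u (t + τ) - u t‖ := L.le_opNorm _
      _ ≤ (‖L‖ + 1) * (ε / (‖L‖ + 1)) := by gcongr; linarith; exact h1 ()
      _ = ε := by field_simp

lemma RAP.add [NormedSpace ℝ X] {u v : ℝ → X} (hu : RAP u) (hv : RAP v) :
    RAP (fun t => u t + v t) :=
  RAP.clm (ContinuousLinearMap.fst ℝ X X + ContinuousLinearMap.snd ℝ X X) (RAP.prod hu hv)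

lemma RAP.sub [NormedSpace ℝ X] {u v : ℝ → X} (hu : RAP u) (hv : RAP v) :
    RAP (fun t => u t - v t) :=
  RAP.clm (ContinuousLinearMap.fst ℝ X X - ContinuousLinearMap.snd ℝ X X) (RAP.prod hu hv)

lemma RAP.smul [NormedSpace ℝ X] (c : ℝ) {u : ℝ → X} (hu : RAP u) :
    RAP (fun t => c • u t) :=
  RAP.clm (c • ContinuousLinearMap.id ℝ X) hu

lemma RAP.shift {u : ℝ → X} (hu : RAP u) (a : ℝ) : RAP (fun t => u (t - a)) := by
  refine RAP_mk ?_ (hu.2.1.comp (uniformContinuous_id.sub uniformContinuous_const)) ?_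
  · obtain ⟨C, hC⟩ := hu.1
    exact ⟨C, fun t => hC _⟩
  · intro ε hε
    refine RelDense_mono ?_ (RAP.TSd hu ε hε)
    intro τ h1
    have := (tendsto_shift (-a)).eventually h1
    show ∀ᶠ t in cocompact ℝ, _
    filter_upwards [this] with t h1 i
    have := h1 i
    rw [show t + -a + τ = t + τ - a by ring, show t + -a = t - a by ring] at this
    exact this

lemma RAP.limit {u : ℝ → X} (H : ∀ ε > 0, ∃ v : ℝ → X, RAP v ∧ ∀ t, ‖v t - u t‖ ≤ ε) :
    RAP u := by
  refine RAP_mk ?_ ?_ ?_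
  · obtain ⟨v, hv, h⟩ := H 1 one_pos
    obtain ⟨C, hC⟩ := hv.1
    refine ⟨C + 1, fun t => ?_⟩
    calc ‖u t‖ = ‖v t - (v t - u t)‖ := by congr 1; abel
      _ ≤ _ := norm_sub_le _ _
      _ ≤ _ := add_le_add (hC t) (h t)
  · rw [Metric.uniformContinuous_iff]
    intro ε hε
    obtain ⟨v, hv, h⟩ := H (ε / 4) (by positivity)
    obtain ⟨δ, hδ, H'⟩ := Metric.uniformContinuous_iff.1 hv.2.1 (ε / 4) (by positivity)
    refine ⟨δ, hδ, fun {s t} hst => ?_⟩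
    have h1 := H' hst
    have h2 := h s
    have h3 := h t
    rw [← dist_eq_norm] at h2 h3
    have := dist_triangle4 (u s) (v s) (v t) (u t)
    rw [dist_comm (u s) (v s)] at this
    linarith
  · intro ε hε
    obtain ⟨v, hv, h⟩ := H (ε / 4) (by positivity)
    refine RelDense_mono ?_ (RAP.TSd hv (ε / 4) (by positivity))
    intro τ h1
    show ∀ᶠ t in cocompact ℝ, _
    filter_upwards [h1] with t h1 i
    have h1 := h1 i
    have h2 := h (t + τ)
    have h3 := h t
    rw [← dist_eq_norm] at *
    have := dist_triangle4 (u (t + τ)) (v (t + τ)) (v t) (u t)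
    rw [dist_comm (u (t + τ)) (v (t + τ))] at this
    linarith
end

section
variable {E : Type*} [NormedAddCommGroup E] [NormedSpace ℝ E] [CompleteSpace E]

lemma int_exp {α : ℝ} (hα : 0 < α) : Integrable (fun x : ℝ => Real.exp (-α * |x|)) := by
  rw [← integrableOn_univ, ← Set.Iic_union_Ioi (a := (0:ℝ))]
  refine IntegrableOn.union ?_ ?_
  · refine (integrableOn_exp_mul_Iic hα 0).congr_fun ?_ measurableSet_Iic
    intro x hx
    simp only [abs_of_nonpos (Set.mem_Iic.1 hx)]; congr 1; ring
  · refine (integrableOn_exp_mul_Ioi (neg_neg_of_pos hα) 0).congr_fun ?_ measurableSet_Ioi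
    intro x hx
    simp only [abs_of_pos (Set.mem_Ioi.1 hx)]

structure Dich (A U V : ℝ → E →L[ℝ] E) (p q : E →L[ℝ] E) (α K : ℝ) : Prop where
  hα : 0 < α
  hK : 0 ≤ K
  pq : p + q = 1
  UV : ∀ t, U t * V t = 1
  VU : ∀ t, V t * U t = 1
  U0 : U 0 = 1
  dU : ∀ t, HasDerivAt U (A t * U t) t
  d1 : ∀ t s, s ≤ t → ‖U t * p * V s‖ ≤ K * Real.exp (-α * (t - s))
  d2 : ∀ t s, t < s → ‖U t * q * V s‖ ≤ K * Real.exp (-α * (s - t))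

noncomputable def Gr (U V : ℝ → E →L[ℝ] E) (p q : E →L[ℝ] E) (t s : ℝ) : E →L[ℝ] E :=
  if s ≤ t then U t * p * V s else -(U t * q * V s)

variable {A U V : ℝ → E →L[ℝ] E} {p q : E →L[ℝ] E} {α K : ℝ}

lemma Dich.V0 (H : Dich A U V p q α K) : V 0 = 1 := by
  have := H.UV 0
  rwa [H.U0, one_mul] at this

lemma Dich.dV (H : Dich A U V p q α K) (t : ℝ) : HasDerivAt V (-(V t * A t)) t := by
  let u : ℝ → (E →L[ℝ] E)ˣ := fun t => ⟨U t, V t, H.UV t, H.VU t⟩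
  have hV : V = fun t => Ring.inverse (U t) := by
    funext s
    exact (Ring.inverse_unit (u s)).symm
  have h1 := hasFDerivAt_ringInverse (𝕜 := ℝ) (u t)
  have h2 := HasFDerivAt.comp_hasDerivAt t h1 (H.dU t)
  rw [hV]
  refine h2.congr_deriv ?_
  have h3 : Ring.inverse (U t) = V t := Ring.inverse_unit (u t)
  show -(V t * (A t * U t) * V t) = -(Ring.inverse (U t) * A t)
  rw [h3, mul_assoc, mul_assoc, H.UV, mul_one]

lemma Dich.contV (H : Dich A U V p q α K) : Continuous V :=
  continuous_iff_continuousAt.2 fun t => (H.dV t).continuousAt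

lemma Dich.bound (H : Dich A U V p q α K) (t s : ℝ) :
    ‖Gr U V p q t s‖ ≤ K * Real.exp (-α * |t - s|) := by
  unfold Gr
  split_ifs with h
  · rw [abs_of_nonneg (by linarith)]; exact H.d1 t s h
  · push Not at h
    rw [norm_neg, abs_of_neg (by linarith), neg_sub]; exact H.d2 t s h

lemma Dich.bound' (H : Dich A U V p q α K) {h : ℝ → E} {C : ℝ} (hb : ∀ t, ‖h t‖ ≤ C) (t s : ℝ) :
    ‖Gr U V p q t s (h s)‖ ≤ K * C * Real.exp (-α * |t - s|) := by
  calc _ ≤ ‖Gr U V p q t s‖ * ‖h s‖ := ContinuousLinearMap.le_opNorm _ _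
    _ ≤ (K * Real.exp (-α * |t - s|)) * C := by
        have := H.hK
        gcongr
        · exact H.bound t s
        · exact hb s
    _ = _ := by ring

lemma Dich.integrable (H : Dich A U V p q α K) {h : ℝ → E} (hc : Continuous h) {C : ℝ}
    (hb : ∀ t, ‖h t‖ ≤ C) (t : ℝ) : Integrable (fun s => Gr U V p q t s (h s)) := by
  have hV := H.contV
  refine Integrable.mono' (((int_exp H.hα).comp_sub_left t).const_mul (K * C)) ?_
    (Eventually.of_forall fun s => H.bound' hb t s)
  have : (fun s => Gr U V p q t s (h s)) = fun s => if s ≤ t then (U t * p * V s) (h s)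
      else -((U t * q * V s) (h s)) := by
    funext s; unfold Gr; split_ifs <;> rfl
  rw [this]
  refine (StronglyMeasurable.ite measurableSet_Iic ?_ ?_).aestronglyMeasurable
  · exact Continuous.stronglyMeasurable (by fun_prop)
  · exact Continuous.stronglyMeasurable (by fun_prop)

lemma Dich.int_bound (H : Dich A U V p q α K) {h : ℝ → E} {C : ℝ}
    (hb : ∀ t, ‖h t‖ ≤ C) (t : ℝ) :
    ‖∫ s, Gr U V p q t s (h s)‖ ≤ K * (∫ x : ℝ, Real.exp (-α * |x|)) * C := by
  have := norm_integral_le_of_norm_le (((int_exp H.hα).comp_sub_left t).const_mul (K * C))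
    (Eventually.of_forall fun s => H.bound' hb t s)
  refine this.trans (le_of_eq ?_)
  rw [integral_const_mul, integral_sub_left_eq_self (fun x => Real.exp (-α * |x|)) volume t]
  ring

lemma Dich.int_deriv (H : Dich A U V p q α K) {h : ℝ → E} (hc : Continuous h) {C : ℝ}
    (hb : ∀ t, ‖h t‖ ≤ C) (t : ℝ) :
    HasDerivAt (fun t => ∫ s, Gr U V p q t s (h s)) (A t (∫ s, Gr U V p q t s (h s)) + h t) t := by
  have hV := H.contV
  have ha : ∀ t, IntegrableOn (fun s => p (V s (h s))) (Set.Iic t) := by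
    intro t
    have h1 := (ContinuousLinearMap.integrable_comp (V t) (H.integrable hc hb t)).integrableOn
      (s := Set.Iic t)
    refine h1.congr_fun ?_ measurableSet_Iic
    intro s hs
    simp only [Gr, if_pos (Set.mem_Iic.1 hs), mul_apply_eq_comp]
    have := congrArg (fun L : E →L[ℝ] E => L (p (V s (h s)))) (H.VU t)
    simpa using this
  have hb' : ∀ t, IntegrableOn (fun s => q (V s (h s))) (Set.Ioi t) := by
    intro t
    have h1 := (ContinuousLinearMap.integrable_comp (V t) (H.integrable hc hb t)).neg.integrableOn
      (s := Set.Ioi t)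
    refine h1.congr_fun ?_ measurableSet_Ioi
    intro s hs
    have hs' : ¬ s ≤ t := not_le.2 hs
    simp only [Gr, if_neg hs', Pi.neg_apply, neg_apply, map_neg, neg_neg,
      mul_apply_eq_comp]
    have := congrArg (fun L : E →L[ℝ] E => L (q (V s (h s)))) (H.VU t)
    simpa using this
  have ca : Continuous (fun s => p (V s (h s))) := by fun_prop
  have cb : Continuous (fun s => q (V s (h s))) := by fun_prop
  have cVh : Continuous (fun s => V s (h s)) := by fun_prop
  set c : E := (∫ s in Set.Iic 0, p (V s (h s))) - ∫ s in Set.Ioi 0, q (V s (h s)) with hcdef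
  have key : ∀ t, ∫ s, Gr U V p q t s (h s) = U t (c + ∫ s in (0:ℝ)..t, V s (h s)) := by
    intro t
    have e1 : ∫ s in Set.Iic t, Gr U V p q t s (h s) = U t (∫ s in Set.Iic t, p (V s (h s))) := by
      rw [← ContinuousLinearMap.integral_comp_comm _ (ha t)]
      refine setIntegral_congr_fun measurableSet_Iic ?_
      intro s hs
      simp [Gr, if_pos (Set.mem_Iic.1 hs)]
    have e2 : ∫ s in Set.Ioi t, Gr U V p q t s (h s)
        = - U t (∫ s in Set.Ioi t, q (V s (h s))) := by
      rw [← ContinuousLinearMap.integral_comp_comm _ (hb' t), ← integral_neg]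
      refine setIntegral_congr_fun measurableSet_Ioi ?_
      intro s hs
      have hs' : ¬ s ≤ t := not_le.2 hs
      simp [Gr, if_neg hs']
    have e3 : ∫ s, Gr U V p q t s (h s) = (∫ s in Set.Iic t, Gr U V p q t s (h s))
        + ∫ s in Set.Ioi t, Gr U V p q t s (h s) := by
      rw [← setIntegral_univ, ← Set.Iic_union_Ioi (a := t)]
      exact setIntegral_union (Set.Iic_disjoint_Ioi le_rfl) measurableSet_Ioi
        (H.integrable hc hb t).integrableOn (H.integrable hc hb t).integrableOn
    have e4 := intervalIntegral.integral_Iic_sub_Iic (ha 0) (ha t)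
    have e5 := intervalIntegral.integral_Ioi_sub_Ioi' (hb' 0) (hb' t)
    have e6 : (∫ s in (0:ℝ)..t, V s (h s)) = (∫ s in (0:ℝ)..t, p (V s (h s)))
        + ∫ s in (0:ℝ)..t, q (V s (h s)) := by
      rw [← intervalIntegral.integral_add (ca.intervalIntegrable _ _) (cb.intervalIntegrable _ _)]
      congr 1
      funext s
      have := congrArg (fun L : E →L[ℝ] E => L (V s (h s))) H.pq
      simpa using this.symm
    rw [e3, e1, e2, e6, ← e4, ← e5, hcdef, ← sub_eq_add_neg, ← map_sub]
    congr 1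
    abel
  have hd : HasDerivAt (fun t => c + ∫ s in (0:ℝ)..t, V s (h s)) (V t (h t)) t :=
    (intervalIntegral.integral_hasDerivAt_right (cVh.intervalIntegrable _ _)
      cVh.stronglyMeasurable.stronglyMeasurableAtFilter cVh.continuousAt).const_add c
  have h2 := (H.dU t).clm_apply hd
  rw [funext key, key t]
  convert h2 using 1
  simp only [mul_apply_eq_comp]
  congr 1
  have := congrArg (fun L : E →L[ℝ] E => L (h t)) (H.UV t)
  simpa using this.symm

lemma Dich.unique (H : Dich A U V p q α K) {w : ℝ → E} {C : ℝ} (hb : ∀ t, ‖w t‖ ≤ C)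
    (hw : ∀ t, HasDerivAt w (A t (w t)) t) (t : ℝ) : w t = 0 := by
  have hd : ∀ t, HasDerivAt (fun t => V t (w t)) 0 t := by
    intro t
    convert (H.dV t).clm_apply (hw t) using 1
    simp
  have hconst : ∀ t, V t (w t) = w 0 := by
    intro t
    have := is_const_of_deriv_eq_zero (fun t => (hd t).differentiableAt) (fun t => (hd t).deriv) t 0
    simpa [H.V0] using this
  have hC : 0 ≤ C := (norm_nonneg _).trans (hb 0)
  have lim : ∀ x : ℝ, (∀ s > 0, x ≤ K * C * Real.exp (-α * s)) → x ≤ 0 := by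
    intro x hx
    have h1 : Tendsto (fun s : ℝ => K * C * Real.exp (-α * s)) atTop (nhds (K * C * 0)) := by
      refine Tendsto.const_mul _ (Real.tendsto_exp_atBot.comp ?_)
      exact tendsto_id.const_mul_atTop_of_neg (neg_neg_of_pos H.hα)
    rw [mul_zero] at h1
    refine ge_of_tendsto h1 ?_
    filter_upwards [eventually_gt_atTop 0] with s hs using hx s hs
  have hp : p (w 0) = 0 := by
    rw [← norm_le_zero_iff]
    refine lim _ fun s hs => ?_
    have h1 := H.d1 0 (-s) (by linarith)
    rw [H.U0, one_mul] at h1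
    rw [← hconst (-s)]
    calc _ = ‖(p * V (-s)) (w (-s))‖ := rfl
      _ ≤ ‖p * V (-s)‖ * ‖w (-s)‖ := ContinuousLinearMap.le_opNorm _ _
      _ ≤ (K * Real.exp (-α * (0 - -s))) * C := by
          have := H.hK
          gcongr
          exact hb _
      _ = _ := by rw [show 0 - -s = s by ring]; ring
  have hq : q (w 0) = 0 := by
    rw [← norm_le_zero_iff]
    refine lim _ fun s hs => ?_
    have h1 := H.d2 0 s hs
    rw [H.U0, one_mul] at h1
    rw [← hconst s]
    calc _ = ‖(q * V s) (w s)‖ := rfl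
      _ ≤ ‖q * V s‖ * ‖w s‖ := ContinuousLinearMap.le_opNorm _ _
      _ ≤ (K * Real.exp (-α * (s - 0))) * C := by
          have := H.hK
          gcongr
          exact hb _
      _ = _ := by rw [sub_zero]; ring
  have h0 : w 0 = 0 := by
    have := congrArg (fun L : E →L[ℝ] E => L (w 0)) H.pq
    simpa [hp, hq] using this.symm
  have := congrArg (fun L : E →L[ℝ] E => L (w t)) (H.UV t)
  simp only [mul_apply_eq_comp, hconst t, h0, map_zero] at this
  simpa using this.symm

end

section
variable {E : Type*} [NormedAddCommGroup E] [NormedSpace ℝ E]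

lemma snd_bound_zero {f : E → E} (hf : ContDiff ℝ 2 f) {C L : ℝ}
    (hC : ∀ x, ‖x‖ ≤ 2 → ‖f x‖ ≤ C) (hL0 : 0 ≤ L)
    (hL : ∀ x y, ‖x‖ ≤ 2 → ‖y‖ ≤ 2 → ‖fderiv ℝ (fderiv ℝ f) x - fderiv ℝ (fderiv ℝ f) y‖ ≤ L * ‖x - y‖) :
    ‖fderiv ℝ (fderiv ℝ f) 0‖ ≤ 4 * C + 2 * L := by
  have hd1 : Differentiable ℝ f := hf.differentiable (by norm_num)
  have hd2 : Differentiable ℝ (fderiv ℝ f) :=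
    (hf.fderiv_right (m := 1) (by norm_num)).differentiable (by norm_num)
  have hC0 : 0 ≤ C := (norm_nonneg _).trans (hC 0 (by simp))
  set B := fderiv ℝ (fderiv ℝ f) 0 with hB
  have key : ∀ v u : E, ‖v‖ ≤ 1 → ‖u‖ ≤ 1 → ‖B v u‖ ≤ 4 * C + 2 * L := by
    intro v u hv hu
    have s1 : ∀ x : E, ‖x‖ ≤ 1 → ‖fderiv ℝ f (x + v) - fderiv ℝ f x - B v‖ ≤ 2 * L := by
      intro x hx
      have := (convex_closedBall (0:E) 2).norm_image_sub_le_of_norm_fderiv_le' (𝕜 := ℝ)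
        (f := fderiv ℝ f) (φ := B) (C := 2 * L) (x := x) (y := x + v) (fun y _ => hd2 y)
        (fun y hy => by
          have hy' : ‖y‖ ≤ 2 := by simpa using hy
          have := hL y 0 hy' (by simp)
          rw [sub_zero] at this
          refine this.trans ?_
          nlinarith)
        (by simp; linarith) (by simpa using (norm_add_le x v).trans (by linarith))
      rw [add_sub_cancel_left] at this
      refine this.trans ?_
      nlinarith
    have s2 := (convex_closedBall (0:E) 1).norm_image_sub_le_of_norm_hasFDerivWithin_le' (𝕜 := ℝ)
        (f := fun x => f (x + v) - f x) (f' := fun x => fderiv ℝ f (x + v) - fderiv ℝ f x)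
        (φ := B v) (C := 2 * L) (x := 0) (y := u)
        (fun y _ => by
          refine HasFDerivAt.hasFDerivWithinAt (HasFDerivAt.sub ?_ (hd1 y).hasFDerivAt)
          exact (hasFDerivAt_comp_add_right v).2 (hd1 (y + v)).hasFDerivAt)
        (fun y hy => s1 y (by simpa using hy)) (by simp) (by simpa using hu)
    simp only [zero_add, sub_zero] at s2
    have c1 := hC (u + v) ((norm_add_le u v).trans (by linarith))
    have c2 := hC u (by linarith)
    have c3 := hC v (by linarith)
    have c4 := hC 0 (by simp)
    calc ‖B v u‖ = ‖(f (u + v) - f u - (f v - f 0)) - (f (u + v) - f u - (f v - f 0) - B v u)‖ := by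
          congr 1; abel
      _ ≤ ‖(f (u + v) - f u) - (f v - f 0)‖ + ‖(f (u + v) - f u - (f v - f 0) - B v u)‖ := norm_sub_le _ _
      _ ≤ (‖f (u + v) - f u‖ + ‖f v - f 0‖) + 2 * L * ‖u‖ := add_le_add (norm_sub_le _ _) s2
      _ ≤ ((‖f (u + v)‖ + ‖f u‖) + (‖f v‖ + ‖f 0‖)) + 2 * L * 1 := by
          gcongr
          · exact norm_sub_le _ _
          · exact norm_sub_le _ _
      _ ≤ _ := by linarith
  have hM : 0 ≤ 4 * C + 2 * L := by positivity
  refine ContinuousLinearMap.opNorm_le_of_unit_norm hM fun v hv => ?_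
  refine ContinuousLinearMap.opNorm_le_of_unit_norm hM fun u hu => ?_
  exact key v u hv.le hu.le

/-- uniform Lipschitz bound for the derivative -/
lemma fderiv_lip {f : ℝ → E → E} (hf : ∀ t, ContDiff ℝ 2 (f t))
    (hb : ∃ C, ∀ t x, ‖x‖ ≤ 2 → ‖f t x‖ ≤ C)
    (hl : ∀ r > 0, ∃ L, ∀ t : ℝ, ∀ x y : E, ‖x‖ ≤ r → ‖y‖ ≤ r →
      ‖fderiv ℝ (fderiv ℝ (f t)) x - fderiv ℝ (fderiv ℝ (f t)) y‖ ≤ L * ‖x - y‖) (ρ : ℝ)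
    (hρ : 0 < ρ) :
    ∃ M, 0 ≤ M ∧ ∀ t x y, ‖x‖ ≤ ρ → ‖y‖ ≤ ρ →
      ‖fderiv ℝ (f t) x - fderiv ℝ (f t) y‖ ≤ M * ‖x - y‖ := by
  obtain ⟨C, hC⟩ := hb
  obtain ⟨L, hL⟩ := hl 2 (by norm_num)
  obtain ⟨L', hL'⟩ := hl ρ hρ
  have hC0 : 0 ≤ C := (norm_nonneg _).trans (hC 0 0 (by simp))
  refine ⟨(4 * C + 2 * |L|) + |L'| * ρ, by positivity, fun t x y hx hy => ?_⟩
  have h0 := snd_bound_zero (hf t) (hC t) (abs_nonneg L) (fun x y hx hy =>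
    (hL t x y hx hy).trans (by gcongr; exact le_abs_self L))
  have hd2 : Differentiable ℝ (fderiv ℝ (f t)) :=
    ((hf t).fderiv_right (m := 1) (by norm_num)).differentiable (by norm_num)
  refine (convex_closedBall (0:E) ρ).norm_image_sub_le_of_norm_fderiv_le (𝕜 := ℝ)
    (f := fderiv ℝ (f t)) (fun z _ => hd2 z) (fun z hz => ?_) (by simpa using hy) (by simpa using hx)
  have hz' : ‖z‖ ≤ ρ := by simpa using hz
  have h1 := hL' t z 0 hz' (by simpa using hρ.le)
  rw [sub_zero] at h1
  calc _ = ‖fderiv ℝ (fderiv ℝ (f t)) 0 + (fderiv ℝ (fderiv ℝ (f t)) z - fderiv ℝ (fderiv ℝ (f t)) 0)‖ := by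
        congr 1; abel
    _ ≤ _ := norm_add_le _ _
    _ ≤ _ := add_le_add h0 (h1.trans (by gcongr; exact le_abs_self _))

/-- remainder estimate -/
lemma rem_lip {f : E → E} (hf : ContDiff ℝ 2 f) {M ρ : ℝ} (hM : 0 ≤ M)
    (h : ∀ x y, ‖x‖ ≤ ρ → ‖y‖ ≤ ρ → ‖fderiv ℝ f x - fderiv ℝ f y‖ ≤ M * ‖x - y‖)
    {x z w : E} {r : ℝ} (hx : ‖x‖ + r ≤ ρ) (hz : ‖z‖ ≤ r) (hw : ‖w‖ ≤ r) :
    ‖f (x + z) - f (x + w) - fderiv ℝ f x (z - w)‖ ≤ M * r * ‖z - w‖ := by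
  have hd1 : Differentiable ℝ f := hf.differentiable (by norm_num)
  have hr : 0 ≤ r := (norm_nonneg _).trans hz
  have := (convex_closedBall x r).norm_image_sub_le_of_norm_fderiv_le' (𝕜 := ℝ)
    (f := f) (φ := fderiv ℝ f x) (C := M * r) (x := x + w) (y := x + z) (fun y _ => hd1 y)
    (fun y hy => by
      rw [mem_closedBall, dist_eq_norm] at hy
      have hy' : ‖y‖ ≤ ρ := by
        calc ‖y‖ = ‖x + (y - x)‖ := by congr 1; abel
          _ ≤ _ := norm_add_le _ _
          _ ≤ ρ := by linarith
      refine (h y x hy' (by linarith)).trans ?_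
      gcongr) (by simpa using hw) (by simpa using hz)
  rwa [add_sub_add_left_eq_sub] at this
end

lemma halving {d : ℝ → ℝ} {B₀ e : ℝ} (h0 : ∀ t, 0 ≤ d t) (hb : ∀ t, d t ≤ B₀)
    (H : ∀ B, 0 ≤ B → (∀ t, d t ≤ B) → ∀ t, d t ≤ B / 2 + e) (t : ℝ) : d t ≤ 2 * e := by
  have hbd : BddAbove (Set.range d) := ⟨B₀, by rintro _ ⟨t, rfl⟩; exact hb t⟩
  have h1 : ∀ t, d t ≤ ⨆ t, d t := fun t => le_ciSup hbd t
  have h2 := H _ ((h0 0).trans (h1 0)) h1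
  have h3 : (⨆ t, d t) ≤ (⨆ t, d t) / 2 + e := ciSup_le h2
  have := h1 t
  linarith

section
variable {E : Type*} [NormedAddCommGroup E] [NormedSpace ℝ E] [CompleteSpace E]

noncomputable def hfun (f : ℝ → E → E) (ξ : ℝ → E) (a : ℝ) (g : ℝ → E → E → E) (ν : ℝ)
    (z : ℝ → E) (t : ℝ) : E :=
  f t (ξ t + z t) - f t (ξ t) - fderiv ℝ (f t) (ξ t) (z t)
    + ν • g t (ξ t + z t) (ξ (t - a) + z (t - a))

theorem main_abs
    (f : ℝ → E → E) (ξ : ℝ → E) (U V : ℝ → E →L[ℝ] E) (p q : E →L[ℝ] E) (α K a : ℝ)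
    (g : ℝ → E → E → E) (M₁ : ℝ → ℝ)
    (hfRAP : ∀ ρ : ℝ, RAPUniform f (closedBall 0 ρ))
    (hfC2 : ∀ t, ContDiff ℝ 2 (f t))
    (hf2lip : ∀ r > 0, ∃ L, ∀ t : ℝ, ∀ x y : E, ‖x‖ ≤ r → ‖y‖ ≤ r →
      ‖fderiv ℝ (fderiv ℝ (f t)) x - fderiv ℝ (fderiv ℝ (f t)) y‖ ≤ L * ‖x - y‖)
    (hξRAP : RAP ξ)
    (hξsol : ∀ t, HasDerivAt ξ (f t (ξ t)) t)
    (H : Dich (fun t => fderiv ℝ (f t) (ξ t)) U V p q α K)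
    (hGreen : ∀ h : ℝ → E, RAP h → RAP (fun t => ∫ s : ℝ, Gr U V p q t s (h s)))
    (hgbdd : ∃ C, ∀ t : ℝ, ∀ x y : E, ‖g t x y‖ ≤ C)
    (hgRAP : ∀ S : Set (E × E),
      Bornology.IsBounded S → RAPUniform (fun t p => g t p.1 p.2) S)
    (hglip : ∀ r > 0, ∀ t : ℝ, ∀ x y z v : E,
      ‖x‖ ≤ r → ‖y‖ ≤ r → ‖z‖ ≤ r → ‖v‖ ≤ r →
      ‖g t x y - g t z v‖ ≤ M₁ r * (‖x - z‖ + ‖y - v‖)) :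
    ∃ r > 0, ∃ ν₀ > 0,
      (∀ ν ∈ Set.Icc (0:ℝ) ν₀,
        ∃! ψ : ℝ → E,
          RAP ψ ∧
          (∀ t, HasDerivAt ψ (f t (ψ t) + ν • g t (ψ t) (ψ (t - a))) t) ∧
          ∀ t, ‖ψ t - ξ t‖ ≤ r) ∧
      (∀ ψ : ℝ → ℝ → E,
        (∀ ν ∈ Set.Icc (0:ℝ) ν₀, RAP (ψ ν) ∧
          (∀ t, HasDerivAt (ψ ν) (f t (ψ ν t) + ν • g t (ψ ν t) (ψ ν (t - a))) t) ∧
          ∀ t, ‖ψ ν t - ξ t‖ ≤ r) →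
        ∀ t, Filter.Tendsto (fun ν => ψ ν t)
          (nhdsWithin 0 (Set.Ioc 0 ν₀)) (nhds (ξ t))) := by
  obtain ⟨Cξ', hCξ'⟩ := hξRAP.1
  set Cξ := |Cξ'| with hCξdef
  have hCξ : ∀ t, ‖ξ t‖ ≤ Cξ := fun t => (hCξ' t).trans (le_abs_self _)
  have hCξ0 : 0 ≤ Cξ := abs_nonneg _
  set ρ := Cξ + 1 with hρ
  have hρ0 : 0 < ρ := by positivity
  obtain ⟨M, hM0, hM⟩ := fderiv_lip hfC2 (by
    obtain ⟨C, hC⟩ := (hfRAP 2).1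
    exact ⟨C, fun t x hx => hC t x (by simpa using hx)⟩) hf2lip ρ hρ0
  obtain ⟨Cg, hCg⟩ := hgbdd
  have hCg0 : 0 ≤ Cg := (norm_nonneg _).trans (hCg 0 0 0)
  set J := ∫ x : ℝ, Real.exp (-α * |x|) with hJ
  have hJ0 : 0 ≤ J := integral_nonneg fun x => (Real.exp_pos _).le
  set Λ := K * J with hΛ
  have hΛ0 : 0 ≤ Λ := mul_nonneg H.hK hJ0
  set m := |M₁ ρ| with hm
  have hm0 : 0 ≤ m := abs_nonneg _
  set r := 1 / (4 * (Λ * M + 1)) with hr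
  have hr0 : 0 < r := by positivity
  have hΛM : 0 ≤ Λ * M := by positivity
  have hr1 : r ≤ 1 / 4 := by
    rw [hr]; apply one_div_le_one_div_of_le <;> linarith
  have hr2 : Λ * M * r ≤ 1 / 4 := by
    rw [hr, mul_one_div, div_le_iff₀ (by positivity)]; linarith
  set ν₀ := r / (4 * (Λ * Cg + Λ * m + 1)) with hν₀
  have hν₀0 : 0 < ν₀ := by positivity
  have hΛCg : 0 ≤ Λ * Cg := by positivity
  have hΛm : 0 ≤ Λ * m := by positivity
  have hνC : Λ * Cg * ν₀ ≤ r / 4 := by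
    rw [hν₀, mul_div_assoc', div_le_iff₀ (by positivity)]; nlinarith
  have hνm : Λ * m * ν₀ ≤ 1 / 16 := by
    rw [hν₀, mul_div_assoc', div_le_iff₀ (by positivity)]; nlinarith
  -- size of the arguments
  have hsz : ∀ {z : ℝ → E}, (∀ t, ‖z t‖ ≤ r) → ∀ t, ‖ξ t + z t‖ ≤ ρ := by
    intro z hz t
    refine (norm_add_le _ _).trans ?_
    have := hz t; have := hCξ t; linarith
  have hrem : ∀ t (z w : E), ‖z‖ ≤ r → ‖w‖ ≤ r →
      ‖f t (ξ t + z) - f t (ξ t + w) - fderiv ℝ (f t) (ξ t) (z - w)‖ ≤ M * r * ‖z - w‖ := by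
    intro t z w hz hw
    exact rem_lip (hfC2 t) hM0 (hM t) (by have := hCξ t; linarith) hz hw
  have hfcomp : ∀ z : ℝ → E, RAP z → (∀ t, ‖z t‖ ≤ r) → RAP (fun t => f t (ξ t + z t)) := by
    intro z hz hzr
    exact RAP.comp (hfRAP ρ) (RAP.add hξRAP hz) (fun t => by simpa using hsz hzr t)
  have hfξ : RAP (fun t => f t (ξ t)) :=
    RAP.comp (hfRAP ρ) hξRAP (fun t => by have := hCξ t; simp; linarith)
  have hAz : ∀ z : ℝ → E, RAP z → (∀ t, ‖z t‖ ≤ r) →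
      RAP (fun t => fderiv ℝ (f t) (ξ t) (z t)) := by
    intro z hz hzr
    refine RAP.limit fun ε hε => ?_
    set c := min 1 (ε / (M + 1)) with hc
    have hc0 : 0 < c := by positivity
    have hc1 : c ≤ 1 := min_le_left _ _
    have hcz : ∀ t, ‖c • z t‖ ≤ c * r := fun t => by
      rw [norm_smul, Real.norm_of_nonneg hc0.le]
      gcongr; exact hzr t
    have hcz' : ∀ t, ‖c • z t‖ ≤ r := fun t => (hcz t).trans (by nlinarith)
    refine ⟨fun t => c⁻¹ • (f t (ξ t + c • z t) - f t (ξ t)),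
      RAP.smul _ (RAP.sub (hfcomp _ (RAP.smul c hz) hcz') hfξ), fun t => ?_⟩
    have h1 : ‖f t (ξ t + c • z t) - f t (ξ t) - fderiv ℝ (f t) (ξ t) (c • z t)‖
        ≤ M * (c * r) * ‖c • z t‖ := by
      have := rem_lip (hfC2 t) hM0 (hM t) (x := ξ t) (z := c • z t) (w := 0) (r := c * r)
        (by have := hCξ t; nlinarith) (hcz t) (by simpa using by positivity)
      simpa using this
    have h2 : c⁻¹ • (f t (ξ t + c • z t) - f t (ξ t)) - fderiv ℝ (f t) (ξ t) (z t)
        = c⁻¹ • (f t (ξ t + c • z t) - f t (ξ t) - fderiv ℝ (f t) (ξ t) (c • z t)) := by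
      rw [map_smul, smul_sub _ _ (c • _), smul_smul c⁻¹ c, inv_mul_cancel₀ hc0.ne', one_smul]
    rw [h2, norm_smul, norm_inv, Real.norm_of_nonneg hc0.le, inv_mul_le_iff₀ hc0]
    have h3 := hcz t
    have h4 : (M + 1) * c ≤ ε := by
      have : c ≤ ε / (M + 1) := min_le_right _ _
      rw [le_div_iff₀ (by positivity)] at this; linarith
    calc _ ≤ M * (c * r) * ‖c • z t‖ := h1
      _ ≤ (M + 1) * (c * 1) * (c * 1) := by
          gcongr
          · linarith
          · linarith
          · exact h3.trans (by nlinarith)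
      _ = c * ((M + 1) * c) := by ring
      _ ≤ c * ε := by gcongr
  have hgcomp : ∀ ψ : ℝ → E, RAP ψ → (∀ t, ‖ψ t‖ ≤ ρ) → RAP (fun t => g t (ψ t) (ψ (t - a))) := by
    intro ψ hψ hψr
    exact RAP.comp (F := fun t (p : E × E) => g t p.1 p.2)
      (hgRAP (closedBall 0 ρ) isBounded_closedBall) (RAP.prod hψ (RAP.shift hψ a))
      (fun t => by
        rw [mem_closedBall_zero_iff]
        exact max_le (hψr _) (hψr _))
  have L1 : ∀ ν, ∀ z : ℝ → E, RAP z → (∀ t, ‖z t‖ ≤ r) → RAP (hfun f ξ a g ν z) := by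
    intro ν z hz hzr
    exact RAP.add (RAP.sub (RAP.sub (hfcomp z hz hzr) hfξ) (hAz z hz hzr))
      (RAP.smul ν (hgcomp (fun t => ξ t + z t) (RAP.add hξRAP hz) (hsz hzr)))
  have L2 : ∀ ν, 0 ≤ ν → ∀ z : ℝ → E, (∀ t, ‖z t‖ ≤ r) → ∀ t,
      ‖hfun f ξ a g ν z t‖ ≤ M * r * ‖z t‖ + ν * Cg := by
    intro ν hν z hzr t
    have h1 := hrem t (z t) 0 (hzr t) (by simpa using hr0.le)
    simp only [add_zero, sub_zero] at h1
    refine (norm_add_le _ _).trans (add_le_add h1 ?_)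
    rw [norm_smul, Real.norm_of_nonneg hν]
    gcongr
    exact hCg _ _ _
  have L3 : ∀ ν, 0 ≤ ν → ∀ z w : ℝ → E, (∀ t, ‖z t‖ ≤ r) → (∀ t, ‖w t‖ ≤ r) → ∀ B,
      (∀ t, ‖z t - w t‖ ≤ B) → ∀ t,
      ‖hfun f ξ a g ν z t - hfun f ξ a g ν w t‖ ≤ (M * r + 2 * ν * m) * B := by
    intro ν hν z w hz hw B hB t
    have h1 := hrem t (z t) (w t) (hz t) (hw t)
    have h2 := hglip ρ hρ0 t _ _ _ _ (hsz hz t) (hsz hz (t - a)) (hsz hw t) (hsz hw (t - a))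
    rw [add_sub_add_left_eq_sub, add_sub_add_left_eq_sub] at h2
    have h3 : ‖g t (ξ t + z t) (ξ (t - a) + z (t - a))
        - g t (ξ t + w t) (ξ (t - a) + w (t - a))‖ ≤ m * (B + B) := by
      refine h2.trans ?_
      gcongr
      · exact le_abs_self _
      · exact hB t
      · exact hB (t - a)
    have e : hfun f ξ a g ν z t - hfun f ξ a g ν w t
        = (f t (ξ t + z t) - f t (ξ t + w t) - fderiv ℝ (f t) (ξ t) (z t - w t))
          + ν • (g t (ξ t + z t) (ξ (t - a) + z (t - a))
        - g t (ξ t + w t) (ξ (t - a) + w (t - a))) := by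
      simp only [hfun, map_sub, smul_sub]; abel
    rw [e]
    calc _ ≤ _ := norm_add_le _ _
      _ ≤ M * r * B + ν * (m * (B + B)) := by
          rw [norm_smul, Real.norm_of_nonneg hν]
          gcongr
          exact h1.trans (by gcongr; exact hB t)
      _ = _ := by ring
  have hbdd : ∀ ν, 0 ≤ ν → ∀ z : ℝ → E, (∀ t, ‖z t‖ ≤ r) → ∀ t,
      ‖hfun f ξ a g ν z t‖ ≤ M * r * r + ν * Cg := by
    intro ν hν z hzr t
    refine (L2 ν hν z hzr t).trans ?_
    gcongr
    exact hzr t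
  have L4 : ∀ ν, 0 ≤ ν → ∀ ψ : ℝ → E, RAP ψ →
      (∀ t, HasDerivAt ψ (f t (ψ t) + ν • g t (ψ t) (ψ (t - a))) t) →
      (∀ t, ‖ψ t - ξ t‖ ≤ r) → ∀ t,
      ψ t - ξ t = ∫ s, Gr U V p q t s (hfun f ξ a g ν (fun t => ψ t - ξ t) s) := by
    intro ν hν ψ hψ hsol hψr t
    have hz := RAP.sub hψ hξRAP
    have hR := L1 ν _ hz hψr
    have hbd := hbdd ν hν _ hψr
    have hd := fun t => H.int_deriv hR.2.1.continuous hbd t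
    rw [← sub_eq_zero]
    refine H.unique (w := fun t => ψ t - ξ t
      - ∫ s, Gr U V p q t s (hfun f ξ a g ν (fun t => ψ t - ξ t) s))
      (C := r + Λ * (M * r * r + ν * Cg)) (fun t => ?_) (fun t => ?_) t
    · exact (norm_sub_le _ _).trans (add_le_add (hψr t) (H.int_bound hbd t))
    · refine (((hsol t).sub (hξsol t)).sub (hd t)).congr_deriv ?_
      simp only [hfun, add_sub_cancel, map_sub]
      abel
  have L5 : ∀ ν ∈ Set.Icc (0:ℝ) ν₀, ∀ z w : ℝ → E, RAP z → RAP w →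
      (∀ t, ‖z t‖ ≤ r) → (∀ t, ‖w t‖ ≤ r) → ∀ B, 0 ≤ B →
      (∀ t, ‖z t - w t‖ ≤ B) → ∀ t,
      ‖(∫ s, Gr U V p q t s (hfun f ξ a g ν z s)) - ∫ s, Gr U V p q t s (hfun f ξ a g ν w s)‖
        ≤ B / 2 := by
    intro ν hν z w hzR hwR hz hw B hB0 hB t
    rw [← integral_sub
      (H.integrable (L1 ν z hzR hz).2.1.continuous (hbdd ν hν.1 z hz) t)
      (H.integrable (L1 ν w hwR hw).2.1.continuous (hbdd ν hν.1 w hw) t)]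
    simp only [← map_sub]
    refine (H.int_bound (L3 ν hν.1 z w hz hw B hB) t).trans ?_
    have h1 : Λ * m * ν ≤ Λ * m * ν₀ := by gcongr; exact hν.2
    calc Λ * ((M * r + 2 * ν * m) * B) = (Λ * M * r + 2 * (Λ * m * ν)) * B := by ring
      _ ≤ (1 / 2) * B := by gcongr; linarith
      _ = B / 2 := by ring
  refine ⟨r, hr0, ν₀, hν₀0, ?_, ?_⟩
  · intro ν hν
    have hex : ∃ z : ℝ → E, RAP z ∧ (∀ t, ‖z t‖ ≤ r) ∧
        ∀ t, z t = ∫ s, Gr U V p q t s (hfun f ξ a g ν z s) := by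
      let S : Set (BoundedContinuousFunction ℝ E) := {z | RAP z ∧ ∀ t, ‖z t‖ ≤ r}
      have hScl : IsClosed S := by
        rw [← isSeqClosed_iff_isClosed]
        intro u z hu hz
        refine ⟨RAP.limit fun ε hε => ?_, fun t => ?_⟩
        · obtain ⟨N, hN⟩ := Metric.tendsto_atTop.1 hz ε hε
          refine ⟨u N, (hu N).1, fun t => ?_⟩
          rw [← dist_eq_norm]
          exact (BoundedContinuousFunction.dist_coe_le_dist t).trans (hN N le_rfl).le
        · have h1 : Tendsto (fun n => u n t) atTop (nhds (z t)) :=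
            ((BoundedContinuousFunction.tendsto_iff_tendstoUniformly.1 hz).tendsto_at t)
          exact le_of_tendsto h1.norm (Eventually.of_forall fun n => (hu n).2 t)
      have hT : ∀ z : S, ∃ w : S, ∀ t, w.1 t = ∫ s, Gr U V p q t s (hfun f ξ a g ν z.1 s) := by
        intro z
        have hR := hGreen _ (L1 ν _ z.2.1 z.2.2)
        have hle : ∀ t, ‖∫ s, Gr U V p q t s (hfun f ξ a g ν z.1 s)‖ ≤ r := by
          intro t
          refine (H.int_bound (hbdd ν hν.1 _ z.2.2) t).trans ?_
          have h1 : Λ * Cg * ν ≤ Λ * Cg * ν₀ := by gcongr; exact hν.2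
          calc Λ * (M * r * r + ν * Cg) = (Λ * M * r) * r + Λ * Cg * ν := by ring
            _ ≤ (1 / 4) * r + r / 4 := by gcongr; linarith
            _ ≤ r := by linarith
        exact ⟨⟨BoundedContinuousFunction.ofNormedAddCommGroup _ hR.2.1.continuous r hle,
          hR, hle⟩, fun t => rfl⟩
      choose T hT using hT
      have : CompleteSpace S := hScl.completeSpace_coe
      have : Nonempty S := by
        refine ⟨⟨0, ?_, fun t => by simpa using hr0.le⟩⟩
        have h0 := RAP.smul 0 hξRAP
        simp only [zero_smul] at h0
        exact h0
      have hcon : ContractingWith (1 / 2) T := by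
        refine ⟨by rw [← NNReal.coe_lt_coe]; norm_num, LipschitzWith.of_dist_le_mul fun z w => ?_⟩
        rw [Subtype.dist_eq, BoundedContinuousFunction.dist_le (by positivity)]
        intro t
        rw [hT, hT, dist_eq_norm]
        refine (L5 ν hν z.1 w.1 z.2.1 w.2.1 z.2.2 w.2.2 (dist z w) dist_nonneg (fun t => ?_) t).trans
          (le_of_eq ?_)
        · rw [← dist_eq_norm]
          exact BoundedContinuousFunction.dist_coe_le_dist t
        · push_cast; ring
      refine ⟨(hcon.fixedPoint T).1, (hcon.fixedPoint T).2.1, (hcon.fixedPoint T).2.2, fun t => ?_⟩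
      conv_lhs => rw [← hcon.fixedPoint_isFixedPt]
      exact hT _ t
    obtain ⟨z, hzR, hzr, hzT⟩ := hex
    refine ⟨fun t => ξ t + z t, ⟨RAP.add hξRAP hzR, fun t => ?_, fun t => by simpa using hzr t⟩, ?_⟩
    · have hd := H.int_deriv (L1 ν z hzR hzr).2.1.continuous (hbdd ν hν.1 z hzr) t
      rw [← funext hzT] at hd
      rw [← hzT t] at hd
      refine ((hξsol t).add hd).congr_deriv ?_
      simp only [hfun]
      abel
    · rintro ψ ⟨hψ, hsol, hψr⟩
      have hψT := L4 ν hν.1 ψ hψ hsol hψr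
      have hψz := RAP.sub hψ hξRAP
      have := halving (d := fun t => ‖(ψ t - ξ t) - z t‖) (B₀ := r + r) (e := 0)
        (fun t => norm_nonneg _)
        (fun t => (norm_sub_le _ _).trans (add_le_add (hψr t) (hzr t)))
        (fun B hB0 hB t => by
          have := L5 ν hν _ z hψz hzR hψr hzr B hB0 hB t
          rw [← hψT t, ← hzT t] at this
          simpa using this)
      funext t
      have h1 := this t
      rw [mul_zero, norm_le_zero_iff] at h1
      rw [← sub_eq_zero, ← h1]; abel
  · intro ψ hψ t
    have key : ∀ ν ∈ Set.Icc (0:ℝ) ν₀, ‖ψ ν t - ξ t‖ ≤ 2 * (Λ * (ν * Cg)) := by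
      intro ν hν
      obtain ⟨hR, hsol, hψr⟩ := hψ ν hν
      have hψT := L4 ν hν.1 _ hR hsol hψr
      refine halving (d := fun t => ‖ψ ν t - ξ t‖) (B₀ := r) (fun t => norm_nonneg _) hψr
        (fun B hB0 hB t => ?_) t
      have h1 : ∀ s, ‖hfun f ξ a g ν (fun t => ψ ν t - ξ t) s‖ ≤ M * r * B + ν * Cg := fun s =>
        (L2 ν hν.1 _ hψr s).trans (by gcongr; exact hB s)
      show ‖ψ ν t - ξ t‖ ≤ _
      rw [hψT t]
      refine (H.int_bound h1 t).trans ?_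
      calc Λ * (M * r * B + ν * Cg) = (Λ * M * r) * B + Λ * (ν * Cg) := by ring
        _ ≤ (1 / 4) * B + Λ * (ν * Cg) := by gcongr
        _ ≤ _ := by linarith
    rw [tendsto_iff_norm_sub_tendsto_zero]
    refine squeeze_zero' (g := fun ν => 2 * (Λ * (ν * Cg)))
      (Eventually.of_forall fun _ => norm_nonneg _) ?_ ?_
    · filter_upwards [self_mem_nhdsWithin] with ν hν using key ν ⟨hν.1.le, hν.2⟩
    · have : Continuous (fun ν : ℝ => 2 * (Λ * (ν * Cg))) := by fun_prop
      have h := this.tendsto 0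
      simp only [zero_mul, mul_zero] at h
      exact h.mono_left nhdsWithin_le_nhds
end

section
variable {n : ℕ}

noncomputable abbrev TE (A : Matrix (Fin n) (Fin n) ℝ) :
    EuclideanSpace ℝ (Fin n) →L[ℝ] EuclideanSpace ℝ (Fin n) :=
  Matrix.toEuclideanCLM (n := Fin n) (𝕜 := ℝ) A

lemma opNorm_eq (A : Matrix (Fin n) (Fin n) ℝ) : opNorm A = ‖TE A‖ := rfl

lemma mulVecE_eq (A : Matrix (Fin n) (Fin n) ℝ) (v) : mulVecE A v = TE A v := rfl

lemma TE_clm (L : EuclideanSpace ℝ (Fin n) →L[ℝ] EuclideanSpace ℝ (Fin n)) :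
    TE (clmToMatrix L) = L := by
  ext1 v
  rw [← mulVecE_eq, mulVecE, clmToMatrix, LinearEquiv.apply_symm_apply]
  rfl

lemma TE_deriv {Φ : ℝ → Matrix (Fin n) (Fin n) ℝ} {B : Matrix (Fin n) (Fin n) ℝ} {t : ℝ}
    (h : ∀ i j, HasDerivAt (fun τ => Φ τ i j) (B i j) t) :
    HasDerivAt (fun τ => TE (Φ τ)) (TE B) t := by
  have e : ∀ C : Matrix (Fin n) (Fin n) ℝ,
      TE C = ∑ i, ∑ j, C i j • TE (Matrix.single i j (1:ℝ)) := by
    intro C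
    conv_lhs => rw [Matrix.matrix_eq_sum_single C]
    simp only [TE, map_sum]
    refine Finset.sum_congr rfl fun i _ => Finset.sum_congr rfl fun j _ => ?_
    rw [← map_smul, Matrix.smul_single, smul_eq_mul, mul_one]
  rw [funext fun τ => e (Φ τ), e B]
  exact HasDerivAt.fun_sum fun i _ => HasDerivAt.fun_sum fun j _ =>
    HasDerivAt.smul_const (F := EuclideanSpace ℝ (Fin n) →L[ℝ] EuclideanSpace ℝ (Fin n)) (h i j)
      (TE (Matrix.single i j (1:ℝ)))
end

end RAPaux

/-- Theorem: RAP solutions of the nonlinear delayed system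
`y'(t) = f(t,y(t)) + ν·g(t, y(t), y(t-a))` under (H1), (H2''), (H3), (H4'). -/
theorem exists_unique_RAP_solution_delayed_nonlinear {n : ℕ}
    (f : ℝ → EuclideanSpace ℝ (Fin n) → EuclideanSpace ℝ (Fin n))
    (ξ : ℝ → EuclideanSpace ℝ (Fin n))
    (Φ : ℝ → Matrix (Fin n) (Fin n) ℝ)
    (P : Matrix (Fin n) (Fin n) ℝ) (α K : ℝ)
    (a : ℝ) (ha : 0 < a)
    (g : ℝ → EuclideanSpace ℝ (Fin n) → EuclideanSpace ℝ (Fin n) →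
      EuclideanSpace ℝ (Fin n))
    (M₁ : ℝ → ℝ)
    (hα : 0 < α) (hK : 1 ≤ K)
    -- f : RAP in t uniformly on compacts, C² in x, second derivative locally
    -- Lipschitz uniformly in t
    (hfRAP : ∀ S : Set (EuclideanSpace ℝ (Fin n)), IsCompact S → RAPUniform f S)
    (hfC2 : ∀ t, ContDiff ℝ 2 (f t))
    (hf2lip : ∀ r > 0, ∃ L, ∀ t : ℝ, ∀ x y : EuclideanSpace ℝ (Fin n),
      ‖x‖ ≤ r → ‖y‖ ≤ r →
      ‖fderiv ℝ (fderiv ℝ (f t)) x - fderiv ℝ (fderiv ℝ (f t)) y‖ ≤ L * ‖x - y‖)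
    -- ξ : unique RAP solution of z' = f(t,z)
    (hξRAP : RAP ξ)
    (hξsol : ∀ t, HasDerivAt ξ (f t (ξ t)) t)
    (hξuniq : ∀ η : ℝ → EuclideanSpace ℝ (Fin n), RAP η →
      (∀ t, HasDerivAt η (f t (η t)) t) → η = ξ)
    -- (H2'') : the variational system along ξ
    (hVRAP : RAPMatrix (fun t => clmToMatrix (fderiv ℝ (f t) (ξ t))))
    (hΦ : IsFundamentalMatrix (fun t => clmToMatrix (fderiv ℝ (f t) (ξ t))) Φ)
    (hdich : ExpDichotomy Φ α K P)
    (hGreen : RAPIntegralProperty (GreenKernel Φ P))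
    -- (H4') : g bounded, RAP in t uniformly on bounded sets, uniformly continuous,
    -- and Lipschitz
    (hgbdd : ∃ C, ∀ t : ℝ, ∀ x y : EuclideanSpace ℝ (Fin n), ‖g t x y‖ ≤ C)
    (hgRAP : ∀ S : Set (EuclideanSpace ℝ (Fin n) × EuclideanSpace ℝ (Fin n)),
      Bornology.IsBounded S → RAPUniform (fun t p => g t p.1 p.2) S)
    (hgUC : ∀ S : Set (EuclideanSpace ℝ (Fin n) × EuclideanSpace ℝ (Fin n)),
      Bornology.IsBounded S →
      UniformContinuousOn
        (fun p : ℝ × (EuclideanSpace ℝ (Fin n) × EuclideanSpace ℝ (Fin n)) =>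
          g p.1 p.2.1 p.2.2) (Set.univ ×ˢ S))
    (hglip : ∀ r > 0, ∀ t : ℝ, ∀ x y z v : EuclideanSpace ℝ (Fin n),
      ‖x‖ ≤ r → ‖y‖ ≤ r → ‖z‖ ≤ r → ‖v‖ ≤ r →
      ‖g t x y - g t z v‖ ≤ M₁ r * (‖x - z‖ + ‖y - v‖)) :
    ∃ r > 0, ∃ ν₀ > 0,
      (∀ ν ∈ Set.Icc (0:ℝ) ν₀,
        ∃! ψ : ℝ → EuclideanSpace ℝ (Fin n),
          RAP ψ ∧
          (∀ t, HasDerivAt ψ (f t (ψ t) + ν • g t (ψ t) (ψ (t - a))) t) ∧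
          ∀ t, ‖ψ t - ξ t‖ ≤ r) ∧
      (∀ ψ : ℝ → ℝ → EuclideanSpace ℝ (Fin n),
        (∀ ν ∈ Set.Icc (0:ℝ) ν₀, RAP (ψ ν) ∧
          (∀ t, HasDerivAt (ψ ν) (f t (ψ ν t) + ν • g t (ψ ν t) (ψ ν (t - a))) t) ∧
          ∀ t, ‖ψ ν t - ξ t‖ ≤ r) →
        ∀ t, Filter.Tendsto (fun ν => ψ ν t)
          (nhdsWithin 0 (Set.Ioc 0 ν₀)) (nhds (ξ t))) := by
  have hdet : ∀ t, IsUnit (Φ t).det := fun t => (Matrix.isUnit_iff_isUnit_det _).1 (hΦ.2.1 t)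
  have H : RAPaux.Dich (fun t => fderiv ℝ (f t) (ξ t)) (fun t => RAPaux.TE (Φ t))
      (fun t => RAPaux.TE (Φ t)⁻¹) (RAPaux.TE P) (RAPaux.TE (1 - P)) α K := by
    refine ⟨hα, by linarith, ?_, fun t => ?_, fun t => ?_, ?_, fun t => ?_, fun t s h => ?_,
      fun t s h => ?_⟩
    · rw [← map_add, add_sub_cancel, map_one]
    · rw [← map_mul, Matrix.mul_nonsing_inv _ (hdet t), map_one]
    · rw [← map_mul, Matrix.nonsing_inv_mul _ (hdet t), map_one]
    · simp only [hΦ.1, RAPaux.TE, map_one]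
    · refine (RAPaux.TE_deriv (hΦ.2.2 t)).congr_deriv ?_
      rw [RAPaux.TE, map_mul]
      congr 1
      exact RAPaux.TE_clm _
    · rw [← map_mul, ← map_mul]
      exact hdich.2.1 t s h
    · rw [← map_mul, ← map_mul]
      exact hdich.2.2 t s h
  have hG : ∀ t s v, mulVecE (GreenKernel Φ P t s) v
      = RAPaux.Gr (fun t => RAPaux.TE (Φ t)) (fun t => RAPaux.TE (Φ t)⁻¹) (RAPaux.TE P)
        (RAPaux.TE (1 - P)) t s v := by
    intro t s v
    rw [RAPaux.mulVecE_eq, GreenKernel, RAPaux.Gr]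
    split_ifs
    · rw [← map_mul, ← map_mul]
    · rw [← map_mul, ← map_mul, RAPaux.TE, map_neg]
  refine RAPaux.main_abs f ξ _ _ _ _ α K a g M₁ (fun ρ => hfRAP _ (isCompact_closedBall 0 ρ)) hfC2
    hf2lip hξRAP hξsol H (fun h hh => ?_) hgbdd hgRAP hglip
  have := hGreen h hh
  simp only [hG] at this
  exact this
end

section
/- Let Ω ⊆ ℝⁿ and let f : ℝ × Ω → ℝ be continuous and bounded. For ν > 0 define F(t,x,ν) = ∫_{−∞}^{t} e^{−ν(t−s)} f(s,x) ds, h(u,x) = sup_{s∈ℝ} |(1/u) ∫₀^{u} f(s−r,x) dr| for u > 0, and ξ(x,ν) = ν² ∫₀^{∞} h(u,x)·u·e^{−νu} du. Then for all t ∈ ℝ, x ∈ Ω, and ν > 0, |F(t,x,ν)| ≤ ν⁻¹·ξ(x,ν). -/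
open MeasureTheory Filter Metric

/-- `Fexp f x ν t = ∫_{-∞}^t e^{-ν(t-s)} f(s,x) ds`. -/
noncomputable def Fexp {n : ℕ} (f : ℝ → EuclideanSpace ℝ (Fin n) → ℝ)
    (x : EuclideanSpace ℝ (Fin n)) (ν t : ℝ) : ℝ :=
  ∫ s in Set.Iic t, Real.exp (-ν * (t - s)) * f s x

/-- `hSup f x u = sup_{s ∈ ℝ} |(1/u) ∫₀ᵘ f(s-r,x) dr|`. -/
noncomputable def hSup {n : ℕ} (f : ℝ → EuclideanSpace ℝ (Fin n) → ℝ)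
    (x : EuclideanSpace ℝ (Fin n)) (u : ℝ) : ℝ :=
  ⨆ s : ℝ, |(1 / u) * ∫ r in (0:ℝ)..u, f (s - r) x|

/-- `xiBound f x ν = ν² ∫₀^∞ hSup(u,x)·u·e^{-νu} du`. -/
noncomputable def xiBound {n : ℕ} (f : ℝ → EuclideanSpace ℝ (Fin n) → ℝ)
    (x : EuclideanSpace ℝ (Fin n)) (ν : ℝ) : ℝ :=
  ν ^ 2 * ∫ u in Set.Ioi (0:ℝ), hSup f x u * u * Real.exp (-ν * u)

/-- Lemma 3.3(1): `|F(t,x,ν)| ≤ ν⁻¹ ξ(x,ν)`. -/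
theorem abs_Fexp_le {n : ℕ} (Ω : Set (EuclideanSpace ℝ (Fin n)))
    (f : ℝ → EuclideanSpace ℝ (Fin n) → ℝ)
    (hfc : ContinuousOn (fun p : ℝ × EuclideanSpace ℝ (Fin n) => f p.1 p.2)
      (Set.univ ×ˢ Ω))
    (hfb : ∃ C, ∀ t : ℝ, ∀ x ∈ Ω, |f t x| ≤ C)
    (t : ℝ) (x : EuclideanSpace ℝ (Fin n)) (hx : x ∈ Ω) (ν : ℝ) (hν : 0 < ν) :
    |Fexp f x ν t| ≤ ν⁻¹ * xiBound f x ν := by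
  obtain ⟨C, hC⟩ := hfb
  have hc : Continuous (fun s => f s x) := by
    have h : ContinuousOn (fun s : ℝ => f s x) Set.univ :=
      hfc.comp (f := fun s : ℝ => (s, x)) (by fun_prop) (fun s _ => ⟨Set.mem_univ _, hx⟩)
    exact continuousOn_univ.mp h
  have hb : ∀ s, |f s x| ≤ C := fun s => hC s x hx
  have hcs : ∀ s, Continuous (fun r => f (s - r) x) := fun s => hc.comp (by fun_prop)
  have hGb : ∀ s u : ℝ, |∫ r in (0:ℝ)..u, f (s - r) x| ≤ C * |u| := by
    intro s u
    have := intervalIntegral.norm_integral_le_of_norm_le_const (a := 0) (b := u) (C := C)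
      (f := fun r => f (s - r) x) (fun r _ => hb _)
    simpa using this
  have hGc : ∀ s, Continuous (fun u : ℝ => ∫ r in (0:ℝ)..u, f (s - r) x) := fun s =>
    intervalIntegral.continuous_primitive (fun a b => (hcs s).intervalIntegrable a b) 0
  set H : ℝ → ℝ := fun u => ⨆ s : ℝ, |∫ r in (0:ℝ)..u, f (s - r) x| with hH
  have hbdd : ∀ u, BddAbove (Set.range fun s : ℝ => |∫ r in (0:ℝ)..u, f (s - r) x|) := fun u =>
    ⟨C * |u|, by rintro _ ⟨s, rfl⟩; exact hGb s u⟩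
  have hHm : Measurable H :=
    (lowerSemicontinuous_ciSup hbdd (fun s => (hGc s).abs.lowerSemicontinuous)).measurable
  have hle : ∀ s u, |∫ r in (0:ℝ)..u, f (s - r) x| ≤ H u := fun s u => le_ciSup (hbdd u) s
  have hHu : ∀ u, H u ≤ C * |u| := fun u => ciSup_le fun s => hGb s u
  have hH0 : ∀ u, 0 ≤ H u := fun u => (abs_nonneg _).trans (hle 0 u)
  have hhs : ∀ u : ℝ, 0 < u → hSup f x u * u = H u := by
    intro u hu
    have : hSup f x u = (1 / u) * H u := by
      simp only [hSup, hH, abs_mul]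
      rw [Real.mul_iSup_of_nonneg (by positivity), abs_of_pos (by positivity : 0 < 1 / u)]
    rw [this]; field_simp
  have hint1 : IntegrableOn (fun u : ℝ => u * Real.exp (-ν * u)) (Set.Ioi 0) := by
    have := integrableOn_rpow_mul_exp_neg_mul_rpow (p := 1) (s := 1) (b := ν) (by norm_num)
      one_pos hν
    simpa using this
  have hHi : IntegrableOn (fun u => H u * Real.exp (-ν * u)) (Set.Ioi 0) := by
    refine Integrable.mono' (hint1.const_mul C) (by fun_prop) ?_
    refine (ae_restrict_iff' measurableSet_Ioi).mpr (ae_of_all _ fun u (hu : 0 < u) => ?_)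
    rw [Real.norm_eq_abs, abs_of_nonneg (mul_nonneg (hH0 u) (Real.exp_pos _).le), ← mul_assoc]
    have := hHu u
    rw [abs_of_pos hu] at this
    gcongr
  set G : ℝ → ℝ := fun u => ∫ r in (0:ℝ)..u, f (t - r) x with hG
  have hGcont : Continuous G := hGc t
  have hGd : ∀ u, HasDerivAt G (f (t - u) x) u := fun u =>
    (hcs t).integral_hasStrictDerivAt 0 u |>.hasDerivAt
  have hGi : IntegrableOn (fun u => Real.exp (-ν * u) * G u) (Set.Ioi 0) := by
    refine Integrable.mono' hHi (by fun_prop) (ae_of_all _ fun u => ?_)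
    rw [norm_mul, Real.norm_eq_abs, Real.norm_eq_abs, Real.abs_exp, mul_comm]
    have := hle t u
    gcongr
  have hgi : IntegrableOn (fun u => Real.exp (-ν * u) * f (t - u) x) (Set.Ioi 0) := by
    have he : IntegrableOn (fun u => Real.exp (-ν * u)) (Set.Ioi 0) :=
      exp_neg_integrableOn_Ioi 0 hν
    have hct := hcs t
    refine Integrable.mono' (he.const_mul C) (by fun_prop) (ae_of_all _ fun u => ?_)
    rw [norm_mul, Real.norm_eq_abs, Real.norm_eq_abs, Real.abs_exp, mul_comm]
    have := hb (t - u)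
    gcongr
  have hF : Fexp f x ν t = ∫ u in Set.Ioi (0:ℝ), Real.exp (-ν * u) * f (t - u) x := by
    have hmp := (Measure.measurePreserving_sub_left (volume : Measure ℝ) t).setIntegral_preimage_emb
      (Homeomorph.subLeft t).measurableEmbedding
      (fun s => Real.exp (-ν * (t - s)) * f s x) (Set.Iic t)
    have hs : (fun u : ℝ => t - u) ⁻¹' Set.Iic t = Set.Ici 0 := by
      ext u; simp
    rw [hs] at hmp
    rw [Fexp, ← hmp, integral_Ici_eq_integral_Ioi]
    simp
  have hd : ∀ u, HasDerivAt (fun u => Real.exp (-ν * u) * G u)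
      (Real.exp (-ν * u) * f (t - u) x - ν * (Real.exp (-ν * u) * G u)) u := by
    intro u
    have h1 : HasDerivAt (fun u : ℝ => Real.exp (-ν * u)) (Real.exp (-ν * u) * (-ν * 1)) u :=
      ((hasDerivAt_id u).const_mul (-ν)).exp
    exact (h1.mul (hGd u)).congr_deriv (by ring)
  have hlim : Tendsto (fun u => Real.exp (-ν * u) * G u) atTop (nhds 0) := by
    have h1 : Tendsto (fun u : ℝ => C * (u * Real.exp (-ν * u))) atTop (nhds 0) := by
      have := (tendsto_rpow_mul_exp_neg_mul_atTop_nhds_zero 1 ν hν).const_mul C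
      simpa using this
    refine squeeze_zero_norm' ?_ h1
    filter_upwards [eventually_gt_atTop (0:ℝ)] with u hu
    rw [norm_mul, Real.norm_eq_abs, Real.norm_eq_abs, Real.abs_exp, mul_comm, ← mul_assoc]
    have := hGb t u
    rw [abs_of_pos hu] at this
    gcongr
  have hparts := integral_Ioi_of_hasDerivAt_of_tendsto' (a := (0:ℝ)) (fun u _ => hd u)
    (hgi.sub (hGi.const_mul ν)) hlim
  rw [integral_sub hgi (hGi.const_mul ν), integral_const_mul] at hparts
  have hG0 : G 0 = 0 := by simp [hG]
  have hFG : Fexp f x ν t = ν * ∫ u in Set.Ioi (0:ℝ), Real.exp (-ν * u) * G u := by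
    rw [hF]; rw [hG0] at hparts; linarith
  have hxi : xiBound f x ν = ν ^ 2 * ∫ u in Set.Ioi (0:ℝ), H u * Real.exp (-ν * u) := by
    rw [xiBound]; congr 1
    refine setIntegral_congr_fun measurableSet_Ioi fun u hu => ?_
    simp only [hhs u hu]
  have hmain : |∫ u in Set.Ioi (0:ℝ), Real.exp (-ν * u) * G u| ≤
      ∫ u in Set.Ioi (0:ℝ), H u * Real.exp (-ν * u) := by
    rw [← Real.norm_eq_abs]
    refine norm_integral_le_of_norm_le hHi (ae_of_all _ fun u => ?_)
    rw [norm_mul, Real.norm_eq_abs, Real.norm_eq_abs, Real.abs_exp, mul_comm]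
    have := hle t u
    gcongr
  rw [hFG, hxi, abs_mul, abs_of_pos hν]
  calc _ ≤ ν * ∫ u in Set.Ioi (0:ℝ), H u * Real.exp (-ν * u) := by gcongr
    _ = _ := by field_simp
end

section
/- Let Ω ⊆ ℝⁿ and let f : ℝ × Ω → ℝ be continuous and bounded. For ν > 0 define F(t,x,ν) = ∫_{−∞}^{t} e^{−ν(t−s)} f(s,x) ds, h(u,x) = sup_{s∈ℝ} |(1/u) ∫₀^{u} f(s−r,x) dr| for u > 0, and ξ(x,ν) = ν² ∫₀^{∞} h(u,x)·u·e^{−νu} du. Then for each x ∈ Ω and ν > 0 the function t ↦ F(t,x,ν) is differentiable and |∂F/∂t(t,x,ν) − f(t,x)| ≤ ξ(x,ν) for all t ∈ ℝ. -/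
open MeasureTheory Filter Metric

lemma aux_bound {g : ℝ → ℝ} {C : ℝ} (hb : ∀ s, |g s| ≤ C) (s u : ℝ) :
    |∫ r in (0:ℝ)..u, g (s - r)| ≤ C * |u| := by
  have := intervalIntegral.norm_integral_le_of_norm_le_const (a := (0:ℝ)) (b := u)
    (f := fun r => g (s - r)) (C := C) (fun r _ => by simpa using hb (s - r))
  simpa using this

lemma aux_int {ν : ℝ} (hν : 0 < ν) :
    IntegrableOn (fun u : ℝ => u * Real.exp (-ν * u)) (Set.Ioi 0) := by
  have := integrableOn_rpow_mul_exp_neg_mul_rpow (p := 1) (s := 1) (b := ν)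
    (by norm_num) (by norm_num) hν
  simpa using this

lemma aux_hasDeriv {g : ℝ → ℝ} (hg : Continuous g) {C : ℝ} (hb : ∀ s, |g s| ≤ C)
    {ν : ℝ} (hν : 0 < ν) (t : ℝ) :
    HasDerivAt (fun τ => ∫ s in Set.Iic τ, Real.exp (-ν * (τ - s)) * g s)
      (g t - ν * ∫ s in Set.Iic t, Real.exp (-ν * (t - s)) * g s) t := by
  have hI : ∀ a, IntegrableOn (fun s => Real.exp (ν * s) * g s) (Set.Iic a) := by
    intro a
    refine ((integrableOn_exp_mul_Iic hν a).mul_const C).mono' ?_ ?_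
    · exact (by fun_prop : Continuous fun s => Real.exp (ν * s) * g s).aestronglyMeasurable
    · refine Eventually.of_forall fun s => ?_
      rw [norm_mul, Real.norm_eq_abs, Real.norm_eq_abs, Real.abs_exp]
      exact mul_le_mul_of_nonneg_left (hb s) (Real.exp_pos _).le
  have hF : ∀ τ, ∫ s in Set.Iic τ, Real.exp (-ν * (τ - s)) * g s
      = Real.exp (-ν * τ) * ∫ s in Set.Iic τ, Real.exp (ν * s) * g s := by
    intro τ
    rw [← integral_const_mul]
    congr 1
    ext s
    rw [← mul_assoc, ← Real.exp_add]
    ring_nf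
  have hJ : ∀ τ, ∫ s in Set.Iic τ, Real.exp (ν * s) * g s
      = (∫ s in Set.Iic t, Real.exp (ν * s) * g s)
        + ∫ s in t..τ, Real.exp (ν * s) * g s := by
    intro τ
    rw [← intervalIntegral.integral_Iic_sub_Iic (hI t) (hI τ)]
    ring
  have hc : Continuous fun s => Real.exp (ν * s) * g s := by fun_prop
  have h1 : HasDerivAt (fun τ => ∫ s in Set.Iic τ, Real.exp (ν * s) * g s)
      (Real.exp (ν * t) * g t) t := by
    rw [funext hJ]
    exact (hc.integral_hasStrictDerivAt t t).hasDerivAt.const_add _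
  have h2 : HasDerivAt (fun τ => Real.exp (-ν * τ)) (Real.exp (-ν * t) * (-ν)) t := by
    have := ((hasDerivAt_id t).const_mul (-ν)).exp
    simpa using this
  have h3 := h2.mul h1
  have e : Real.exp (-ν * t) * Real.exp (ν * t) = 1 := by
    rw [← Real.exp_add]; simp
  rw [funext hF]
  refine h3.congr_deriv ?_
  rw [hF t, ← mul_assoc (Real.exp (-ν * t)) (Real.exp (ν * t)), e]
  ring

lemma aux_parts {g : ℝ → ℝ} (hg : Continuous g) {C : ℝ} (hb : ∀ s, |g s| ≤ C)
    {ν : ℝ} (hν : 0 < ν) (t : ℝ) :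
    ∫ s in Set.Iic t, Real.exp (-ν * (t - s)) * g s
      = ν * ∫ u in Set.Ioi (0:ℝ), (∫ r in (0:ℝ)..u, g (t - r)) * Real.exp (-ν * u) := by
  have hsub : ∫ s in Set.Iic t, Real.exp (-ν * (t - s)) * g s
      = ∫ u in Set.Ioi (0:ℝ), g (t - u) * Real.exp (-ν * u) := by
    rw [← integral_Ici_eq_integral_Ioi, ← integral_indicator measurableSet_Iic,
      ← integral_indicator measurableSet_Ici,
      ← integral_sub_left_eq_self _ volume t]
    congr 1
    ext u
    by_cases hu : 0 ≤ u
    · simp [Set.indicator, hu, mul_comm]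
    · simp [Set.indicator, hu]
  have hG : ∀ u, HasDerivAt (fun u => ∫ r in (0:ℝ)..u, g (t - r)) (g (t - u)) u := fun u =>
    ((by fun_prop : Continuous fun r => g (t - r)).integral_hasStrictDerivAt 0 u).hasDerivAt
  have hGc : Continuous (fun u => ∫ r in (0:ℝ)..u, g (t - r)) :=
    continuous_iff_continuousAt.2 fun u => (hG u).continuousAt
  have i1 : IntegrableOn (fun u => g (t - u) * Real.exp (-ν * u)) (Set.Ioi 0) := by
    refine ((integrableOn_exp_mul_Ioi (neg_lt_zero.2 hν) 0).const_mul C).mono' ?_ ?_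
    · exact (by fun_prop : Continuous fun u => g (t - u) * Real.exp (-ν * u)).aestronglyMeasurable
    · refine Eventually.of_forall fun s => ?_
      rw [norm_mul, Real.norm_eq_abs, Real.norm_eq_abs, Real.abs_exp]
      exact mul_le_mul_of_nonneg_right (hb _) (Real.exp_pos _).le
  have i2 : IntegrableOn (fun u => (∫ r in (0:ℝ)..u, g (t - r)) * Real.exp (-ν * u))
      (Set.Ioi 0) := by
    refine ((aux_int hν).const_mul C).mono' ?_ ?_
    · exact (hGc.mul (by fun_prop)).aestronglyMeasurable
    · refine (ae_restrict_iff' measurableSet_Ioi).2 (Eventually.of_forall fun u hu => ?_)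
      rw [norm_mul, Real.norm_eq_abs, Real.norm_eq_abs, Real.abs_exp, ← mul_assoc]
      have := aux_bound hb t u
      rw [abs_of_pos (Set.mem_Ioi.1 hu)] at this
      exact mul_le_mul_of_nonneg_right this (Real.exp_pos _).le
  have hlim : Tendsto (fun u => (∫ r in (0:ℝ)..u, g (t - r)) * Real.exp (-ν * u))
      atTop (nhds 0) := by
    have h0 : Tendsto (fun u : ℝ => (C / ν) * ((ν * u) ^ 1 * Real.exp (-(ν * u)))) atTop
        (nhds 0) := by
      have := ((Real.tendsto_pow_mul_exp_neg_atTop_nhds_zero 1).comp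
        (tendsto_id.const_mul_atTop hν)).const_mul (C / ν)
      simpa [Function.comp_def] using this
    refine squeeze_zero_norm' ?_ h0
    filter_upwards [eventually_gt_atTop 0] with u hu
    rw [norm_mul, Real.norm_eq_abs, Real.norm_eq_abs, Real.abs_exp]
    have := aux_bound hb t u
    rw [abs_of_pos hu] at this
    have e : (C / ν) * ((ν * u) ^ 1 * Real.exp (-(ν * u))) = C * u * Real.exp (-ν * u) := by
      rw [neg_mul]; field_simp
    rw [e]
    exact mul_le_mul_of_nonneg_right this (Real.exp_pos _).le
  have hd : ∀ u ∈ Set.Ici (0:ℝ),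
      HasDerivAt (fun u => (∫ r in (0:ℝ)..u, g (t - r)) * Real.exp (-ν * u))
      (g (t - u) * Real.exp (-ν * u)
        - ν * ((∫ r in (0:ℝ)..u, g (t - r)) * Real.exp (-ν * u))) u := by
    intro u _
    have h2 : HasDerivAt (fun τ => Real.exp (-ν * τ)) (Real.exp (-ν * u) * (-ν)) u := by
      have := ((hasDerivAt_id u).const_mul (-ν)).exp
      simpa using this
    refine ((hG u).mul h2).congr_deriv ?_
    ring
  have key := integral_Ioi_of_hasDerivAt_of_tendsto' hd (i1.sub (i2.const_mul ν)) hlim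
  rw [integral_sub i1 (i2.const_mul ν), integral_const_mul] at key
  simp only [intervalIntegral.integral_same, zero_mul, sub_zero] at key
  rw [hsub]
  linarith

lemma aux_sup {g : ℝ → ℝ} (hg : Continuous g) {C : ℝ} (hb : ∀ s, |g s| ≤ C)
    {ν : ℝ} (hν : 0 < ν) (t : ℝ) :
    |∫ u in Set.Ioi (0:ℝ), (∫ r in (0:ℝ)..u, g (t - r)) * Real.exp (-ν * u)|
      ≤ ∫ u in Set.Ioi (0:ℝ), (⨆ s : ℝ, |(1 / u) * ∫ r in (0:ℝ)..u, g (s - r)|) * u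
          * Real.exp (-ν * u) := by
  have hbdd : ∀ u, BddAbove (Set.range fun s : ℝ => |∫ r in (0:ℝ)..u, g (s - r)|) := by
    intro u
    refine ⟨C * |u|, ?_⟩
    rintro _ ⟨s, rfl⟩
    exact aux_bound hb s u
  have hE : ∫ u in Set.Ioi (0:ℝ), (⨆ s : ℝ, |(1 / u) * ∫ r in (0:ℝ)..u, g (s - r)|) * u
          * Real.exp (-ν * u)
      = ∫ u in Set.Ioi (0:ℝ), (⨆ s : ℝ, |∫ r in (0:ℝ)..u, g (s - r)|)
          * Real.exp (-ν * u) := by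
    refine setIntegral_congr_fun measurableSet_Ioi fun u hu => ?_
    have hu : 0 < u := hu
    rw [mul_comm _ u, Real.mul_iSup_of_nonneg hu.le]
    congr 2
    ext s
    rw [abs_mul, abs_of_pos (by positivity : 0 < 1 / u)]
    field_simp
  have hm : Measurable fun u : ℝ => ⨆ s : ℝ, |∫ r in (0:ℝ)..u, g (s - r)| := by
    refine (lowerSemicontinuous_ciSup hbdd fun s => ?_).measurable
    refine Continuous.lowerSemicontinuous (Continuous.abs ?_)
    exact continuous_iff_continuousAt.2 fun u =>
      ((by fun_prop : Continuous fun r => g (s - r)).integral_hasStrictDerivAt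
        0 u).hasDerivAt.continuousAt
  have hI : IntegrableOn (fun u => (⨆ s : ℝ, |∫ r in (0:ℝ)..u, g (s - r)|)
          * Real.exp (-ν * u)) (Set.Ioi 0) := by
    refine ((aux_int hν).const_mul C).mono' ?_ ?_
    · exact (hm.mul (by fun_prop)).aestronglyMeasurable
    · refine (ae_restrict_iff' measurableSet_Ioi).2 (Eventually.of_forall fun u hu => ?_)
      have hu : 0 < u := hu
      rw [norm_mul, Real.norm_eq_abs, Real.norm_eq_abs, Real.abs_exp, ← mul_assoc,
        abs_of_nonneg (Real.iSup_nonneg fun s => abs_nonneg _)]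
      refine mul_le_mul_of_nonneg_right (ciSup_le fun s => ?_) (Real.exp_pos _).le
      have := aux_bound hb s u
      rwa [abs_of_pos hu] at this
  rw [hE, ← Real.norm_eq_abs]
  refine norm_integral_le_of_norm_le hI (Eventually.of_forall fun u => ?_)
  rw [norm_mul, Real.norm_eq_abs, Real.norm_eq_abs, Real.abs_exp]
  exact mul_le_mul_of_nonneg_right (le_ciSup (hbdd u) t) (Real.exp_pos _).le

/-- Lemma 3.3(2): `t ↦ F(t,x,ν)` is differentiable and
`|∂F/∂t(t,x,ν) − f(t,x)| ≤ ξ(x,ν)`. -/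
theorem deriv_Fexp_sub_le {n : ℕ} (Ω : Set (EuclideanSpace ℝ (Fin n)))
    (f : ℝ → EuclideanSpace ℝ (Fin n) → ℝ)
    (hfc : ContinuousOn (fun p : ℝ × EuclideanSpace ℝ (Fin n) => f p.1 p.2)
      (Set.univ ×ˢ Ω))
    (hfb : ∃ C, ∀ t : ℝ, ∀ x ∈ Ω, |f t x| ≤ C)
    (x : EuclideanSpace ℝ (Fin n)) (hx : x ∈ Ω) (ν : ℝ) (hν : 0 < ν) :
    (∀ t, DifferentiableAt ℝ (fun τ => Fexp f x ν τ) t) ∧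
    ∀ t, |deriv (fun τ => Fexp f x ν τ) t - f t x| ≤ xiBound f x ν := by
  obtain ⟨C, hC⟩ := hfb
  have hg : Continuous fun s => f s x := by
    have h : ContinuousOn (fun s : ℝ => f s x) Set.univ :=
      hfc.comp (f := fun s : ℝ => (s, x)) (by fun_prop) (fun s _ => ⟨trivial, hx⟩)
    exact continuousOn_univ.1 h
  have hb : ∀ s, |f s x| ≤ C := fun s => hC s x hx
  have hd : ∀ t, HasDerivAt (fun τ => Fexp f x ν τ) (f t x - ν * Fexp f x ν t) t :=
    fun t => aux_hasDeriv hg hb hν t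
  refine ⟨fun t => (hd t).differentiableAt, fun t => ?_⟩
  rw [(hd t).deriv]
  have h1 : Fexp f x ν t = _ := aux_parts hg hb hν t
  have h2 := aux_sup hg hb hν t
  rw [h1, show ∀ a b : ℝ, a - ν * (ν * b) - a = -(ν ^ 2 * b) by intros; ring, abs_neg, abs_mul,
    abs_of_pos (by positivity : 0 < ν ^ 2)]
  exact mul_le_mul_of_nonneg_left h2 (by positivity)
end

section
/- Let Ω ⊆ ℝⁿ and let f : ℝ × Ω → ℝ be continuous and bounded, and for ν > 0 define F(t,x,ν) = ∫_{−∞}^{t} e^{−ν(t−s)} f(s,x) ds. Fix x ∈ Ω and suppose f(·,x) is ergodic uniformly under translations: there exists M ∈ ℝ such that (1/(2T)) ∫_{−T}^{T} f(t+r,x) dt → M as T → ∞, uniformly in r ∈ ℝ. Then for every ν > 0 and every r ∈ ℝ, (1/(2T)) ∫_{−T}^{T} F(t+r,x,ν) dt → M/ν as T → ∞. -/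
open MeasureTheory Filter Metric

theorem Fexp_ergodic_aux (g : ℝ → ℝ) (hg : Continuous g) (C : ℝ) (hC : ∀ t, |g t| ≤ C)
    (ν : ℝ) (hν : 0 < ν) (F : ℝ → ℝ)
    (hF : ∀ t, F t = ∫ s in Set.Iic t, Real.exp (-ν * (t - s)) * g s) :
    (∀ t, HasDerivAt F (-ν * F t + g t) t) ∧ ∀ t, |F t| ≤ C / ν := by
  have hF' : ∀ t, F t = Real.exp (-ν * t) * ∫ s in Set.Iic t, Real.exp (ν * s) * g s := by
    intro t
    rw [hF, ← integral_const_mul]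
    congr 1; ext s
    rw [← mul_assoc, ← Real.exp_add]
    congr 2; ring
  have hexp : ∀ t, IntegrableOn (fun s => Real.exp (ν * s)) (Set.Iic t) := fun t =>
    integrableOn_exp_mul_Iic hν t
  have hcont : Continuous (fun s => Real.exp (ν * s) * g s) := by fun_prop
  have hbd : ∀ s, ‖Real.exp (ν * s) * g s‖ ≤ C * Real.exp (ν * s) := by
    intro s
    rw [norm_mul, Real.norm_eq_abs, Real.norm_eq_abs, Real.abs_exp, mul_comm]
    exact mul_le_mul_of_nonneg_right (hC s) (Real.exp_pos _).le
  have hint : ∀ t, IntegrableOn (fun s => Real.exp (ν * s) * g s) (Set.Iic t) := fun t =>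
    ((hexp t).const_mul C).mono' hcont.aestronglyMeasurable (Eventually.of_forall hbd)
  constructor
  · intro t
    have h1 : HasDerivAt (fun t => ∫ s in Set.Iic t, Real.exp (ν * s) * g s)
        (Real.exp (ν * t) * g t) t := by
      have h2 : (fun t => ∫ s in Set.Iic t, Real.exp (ν * s) * g s) = fun t =>
          (∫ s in (0:ℝ)..t, Real.exp (ν * s) * g s)
            + ∫ s in Set.Iic (0:ℝ), Real.exp (ν * s) * g s := by
        ext u
        rw [← intervalIntegral.integral_Iic_sub_Iic (hint 0) (hint u)]; ring
      rw [h2]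
      exact (hcont.integral_hasStrictDerivAt 0 t).hasDerivAt.add_const _
    have h3 : HasDerivAt (fun t => Real.exp (-ν * t)) (Real.exp (-ν * t) * (-ν * 1)) t :=
      ((hasDerivAt_id t).const_mul (-ν)).exp
    have h4 := h3.mul h1
    rw [show F = _ from funext hF']
    refine h4.congr_deriv ?_
    beta_reduce
    have : Real.exp (-ν * t) * Real.exp (ν * t) = 1 := by
      rw [← Real.exp_add]; simp
    linear_combination (g t) * this
  · intro t
    rw [hF', abs_mul, Real.abs_exp]
    have h5 := norm_integral_le_of_norm_le ((hexp t).const_mul C) (Eventually.of_forall hbd)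
    rw [integral_const_mul, integral_exp_mul_Iic hν] at h5
    calc _ ≤ Real.exp (-ν * t) * (C * (Real.exp (ν * t) / ν)) :=
          mul_le_mul_of_nonneg_left h5 (Real.exp_pos _).le
      _ = C / ν := by
        have : Real.exp (-ν * t) * Real.exp (ν * t) = 1 := by
          rw [← Real.exp_add]; simp
        linear_combination (C / ν) * this


/-- Lemma 3.3(3): if `f(·,x)` is ergodic with mean `M`,
uniformly under translations, then `F(·,x,ν)` is ergodic with mean `M/ν`. -/
theorem Fexp_ergodic {n : ℕ} (Ω : Set (EuclideanSpace ℝ (Fin n)))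
    (f : ℝ → EuclideanSpace ℝ (Fin n) → ℝ)
    (hfc : ContinuousOn (fun p : ℝ × EuclideanSpace ℝ (Fin n) => f p.1 p.2)
      (Set.univ ×ˢ Ω))
    (hfb : ∃ C, ∀ t : ℝ, ∀ x ∈ Ω, |f t x| ≤ C)
    (x : EuclideanSpace ℝ (Fin n)) (hx : x ∈ Ω) (M : ℝ)
    (hM : TendstoUniformly
      (fun T : ℝ => fun r : ℝ => (1 / (2 * T)) * ∫ t in -T..T, f (t + r) x)
      (fun _ => M) Filter.atTop)
    (ν : ℝ) (hν : 0 < ν) (r : ℝ) :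
    Filter.Tendsto
      (fun T : ℝ => (1 / (2 * T)) * ∫ t in -T..T, Fexp f x ν (t + r))
      Filter.atTop (nhds (M / ν)) := by
  obtain ⟨C, hC⟩ := hfb
  have hg : Continuous (fun s => f s x) := by
    have : Continuous (fun s : ℝ => (s, x)) := by fun_prop
    exact hfc.comp_continuous this (fun s => ⟨trivial, hx⟩)
  obtain ⟨hd, hb⟩ := Fexp_ergodic_aux (fun s => f s x) hg C (fun t => hC t x hx) ν hν
    (Fexp f x ν) (fun t => rfl)
  have hFc : Continuous (Fexp f x ν) :=
    continuous_iff_continuousAt.2 fun t => (hd t).continuousAt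
  have key : ∀ T : ℝ, (∫ t in -T..T, Fexp f x ν (t + r)) =
      (1 / ν) * ((∫ t in -T..T, f (t + r) x) - (Fexp f x ν (T + r) - Fexp f x ν (-T + r))) := by
    intro T
    have hc1 : Continuous (fun t => Fexp f x ν (t + r)) := by fun_prop
    have hc2 : Continuous (fun t => f (t + r) x) := hg.comp (continuous_add_const r)
    have h := intervalIntegral.integral_eq_sub_of_hasDerivAt (a := -T) (b := T)
      (f := fun t => Fexp f x ν (t + r)) (f' := fun t => -ν * Fexp f x ν (t + r) + f (t + r) x)
      (fun t _ => (hd (t + r)).comp_add_const t r)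
      ((hc1.const_mul (-ν)).add hc2 |>.intervalIntegrable _ _)
    rw [intervalIntegral.integral_add ((hc1.const_mul (-ν)).intervalIntegrable _ _)
      (hc2.intervalIntegrable _ _), intervalIntegral.integral_const_mul] at h
    rw [← h]
    field_simp
    ring
  have h0 : Tendsto (fun T : ℝ => (1 / (2 * T)) * (Fexp f x ν (T + r) - Fexp f x ν (-T + r)))
      atTop (nhds 0) := by
    have hlim : Tendsto (fun T : ℝ => (C / ν) * T⁻¹) atTop (nhds 0) := by
      simpa using tendsto_inv_atTop_zero.const_mul (C / ν)
    refine squeeze_zero_norm' ?_ hlim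
    filter_upwards [eventually_gt_atTop 0] with T hT
    rw [norm_mul, Real.norm_eq_abs, Real.norm_eq_abs, abs_of_pos (by positivity)]
    have h1 : |Fexp f x ν (T + r) - Fexp f x ν (-T + r)| ≤ 2 * (C / ν) := by
      have := abs_sub (Fexp f x ν (T + r)) (Fexp f x ν (-T + r))
      linarith [hb (T + r), hb (-T + r)]
    calc _ ≤ 1 / (2 * T) * (2 * (C / ν)) := mul_le_mul_of_nonneg_left h1 (by positivity)
      _ = _ := by field_simp
  have hlim := ((hM.tendsto_at r).sub h0).const_mul (1 / ν)
  rw [show M / ν = 1 / ν * (M - 0) by ring]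
  refine hlim.congr fun T => ?_
  rw [key]
  ring
end

section
/- Let Ω ⊂ ℝⁿ be compact and let f : ℝ × Ω → ℝ be RAP in t uniformly with respect to x ∈ Ω. For ν > 0 define F(t,x,ν) = ∫_{−∞}^{t} e^{−ν(t−s)} f(s,x) ds. Then for each fixed ν > 0 the function (t,x) ↦ F(t,x,ν) is RAP in t uniformly with respect to x ∈ Ω. -/
open MeasureTheory Filter Metric

lemma aux_Fexp_eq {n : ℕ} (f : ℝ → EuclideanSpace ℝ (Fin n) → ℝ)
    (x : EuclideanSpace ℝ (Fin n)) (ν t : ℝ) :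
    Fexp f x ν t = ∫ u in Set.Ioi (0:ℝ), Real.exp (-ν * u) * f (t - u) x := by
  unfold Fexp
  rw [← integral_Ici_eq_integral_Ioi, ← integral_indicator measurableSet_Iic,
    ← integral_indicator measurableSet_Ici, ← integral_sub_left_eq_self _ volume t]
  congr 1
  ext u
  simp [Set.indicator]

lemma aux_exp_int (ν : ℝ) (hν : 0 < ν) :
    IntegrableOn (fun u => Real.exp (-ν * u)) (Set.Ioi (0:ℝ)) ∧
    ∫ u in Set.Ioi (0:ℝ), Real.exp (-ν * u) = 1 / ν := by
  refine ⟨integrableOn_exp_mul_Ioi (by linarith) 0, ?_⟩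
  rw [integral_exp_mul_Ioi (by linarith) 0]
  simp

lemma aux_integrable (ν : ℝ) (hν : 0 < ν) (h : ℝ → ℝ) (hc : Continuous h) (C : ℝ)
    (hC : ∀ t, ‖h t‖ ≤ C) (t : ℝ) :
    IntegrableOn (fun u => Real.exp (-ν * u) * h (t - u)) (Set.Ioi (0:ℝ)) := by
  refine Integrable.mono' ((aux_exp_int ν hν).1.mul_const C) ?_ ?_
  · exact Continuous.aestronglyMeasurable (by fun_prop)
  · refine Eventually.of_forall fun u => ?_
    rw [norm_mul, Real.norm_of_nonneg (Real.exp_pos _).le]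
    exact mul_le_mul_of_nonneg_left (hC _) (Real.exp_pos _).le

lemma aux_bound_s9 (ν : ℝ) (hν : 0 < ν) (g : ℝ → ℝ) (A : ℝ) (hA : ∀ u, ‖g u‖ ≤ A) :
    ‖∫ u in Set.Ioi (0:ℝ), Real.exp (-ν * u) * g u‖ ≤ A / ν := by
  have h := aux_exp_int ν hν
  have : ‖∫ u in Set.Ioi (0:ℝ), Real.exp (-ν * u) * g u‖
      ≤ ∫ u in Set.Ioi (0:ℝ), Real.exp (-ν * u) * A := by
    refine norm_integral_le_of_norm_le (h.1.mul_const A) (Eventually.of_forall fun u => ?_)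
    rw [norm_mul, Real.norm_of_nonneg (Real.exp_pos _).le]
    exact mul_le_mul_of_nonneg_left (hA _) (Real.exp_pos _).le
  rw [integral_mul_const, h.2] at this
  calc _ ≤ _ := this
    _ = _ := by ring

lemma aux_bound2 (ν : ℝ) (hν : 0 < ν) (g : ℝ → ℝ) (A B T : ℝ) (hA0 : 0 ≤ A) (hB0 : 0 ≤ B)
    (hB : ∀ u, ‖g u‖ ≤ B) (hA : ∀ u, 0 < u → u ≤ T → ‖g u‖ ≤ A) :
    ‖∫ u in Set.Ioi (0:ℝ), Real.exp (-ν * u) * g u‖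
      ≤ A / ν + 2 * B / ν * Real.exp (-(ν / 2) * T) := by
  have h := aux_exp_int ν hν
  have h2 := aux_exp_int (ν / 2) (by linarith)
  have : ‖∫ u in Set.Ioi (0:ℝ), Real.exp (-ν * u) * g u‖
      ≤ ∫ u in Set.Ioi (0:ℝ), (Real.exp (-ν * u) * A +
        Real.exp (-(ν / 2) * u) * (B * Real.exp (-(ν / 2) * T))) := by
    refine norm_integral_le_of_norm_le ((h.1.mul_const A).add (h2.1.mul_const _)) ?_
    refine (ae_restrict_iff' measurableSet_Ioi).2 (Eventually.of_forall fun u hu => ?_)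
    rw [norm_mul, Real.norm_of_nonneg (Real.exp_pos _).le]
    by_cases hT : u ≤ T
    · have := mul_le_mul_of_nonneg_left (hA u hu hT) (Real.exp_pos (-ν * u)).le
      have : 0 ≤ Real.exp (-(ν / 2) * u) * (B * Real.exp (-(ν / 2) * T)) := by positivity
      linarith
    · have h1 := mul_le_mul_of_nonneg_left (hB u) (Real.exp_pos (-ν * u)).le
      have h3 : Real.exp (-ν * u) ≤ Real.exp (-(ν / 2) * u) * Real.exp (-(ν / 2) * T) := by
        rw [← Real.exp_add]
        apply Real.exp_le_exp.2
        nlinarith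
      have h4 := mul_le_mul_of_nonneg_right h3 hB0
      have : 0 ≤ Real.exp (-ν * u) * A := by positivity
      linarith
  rw [integral_add (h.1.mul_const A) (h2.1.mul_const _), integral_mul_const, integral_mul_const,
    h.2, h2.2] at this
  calc _ ≤ _ := this
    _ = _ := by field_simp

lemma aux_le_sup {E : Type*} (S : Set E) (g : E → ℝ) (B : ℝ) (h0 : ∀ x, 0 ≤ g x)
    (hB : ∀ x ∈ S, g x ≤ B) (x : E) (hx : x ∈ S) : g x ≤ ⨆ y ∈ S, g y := by
  have hb : BddAbove (Set.range fun y => ⨆ _ : y ∈ S, g y) := by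
    refine ⟨max B 0, ?_⟩
    rintro _ ⟨y, rfl⟩
    exact Real.iSup_le (fun hy => (hB y hy).trans (le_max_left _ _)) (le_max_right _ _)
  refine le_trans ?_ (le_ciSup hb x)
  simp [hx]

lemma aux_sup_le {E : Type*} (S : Set E) (g : E → ℝ) (B : ℝ) (hB0 : 0 ≤ B)
    (hB : ∀ x ∈ S, g x ≤ B) : ⨆ y ∈ S, g y ≤ B :=
  Real.iSup_le (fun y => Real.iSup_le (fun hy => hB y hy) hB0) hB0

lemma aux_sup_nonneg {E : Type*} (S : Set E) (g : E → ℝ) (h0 : ∀ x, 0 ≤ g x) :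
    0 ≤ ⨆ y ∈ S, g y :=
  Real.iSup_nonneg (fun y => Real.iSup_nonneg (fun _ => h0 y))

/-- Lemma 3.3(4): if `f` is RAP in `t` uniformly w.r.t. `x`
in the compact set `Ω`, then so is `F(·,·,ν)` for each `ν > 0`. -/
theorem Fexp_RAPUniform {n : ℕ} (Ω : Set (EuclideanSpace ℝ (Fin n)))
    (hΩ : IsCompact Ω)
    (f : ℝ → EuclideanSpace ℝ (Fin n) → ℝ)
    (hf : RAPUniform f Ω)
    (ν : ℝ) (hν : 0 < ν) :
    RAPUniform (fun t x => Fexp f x ν t) Ω := by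
  obtain ⟨⟨C0, hC0⟩, huc, hrd⟩ := hf
  obtain ⟨C, hCnn, hC⟩ : ∃ C, 0 ≤ C ∧ ∀ t, ∀ x ∈ Ω, ‖f t x‖ ≤ C :=
    ⟨max C0 0, le_max_right _ _, fun t x hx => (hC0 t x hx).trans (le_max_left _ _)⟩
  have hcont : ∀ x ∈ Ω, Continuous fun t => f t x := by
    intro x hx
    exact huc.continuousOn.comp_continuous (f := fun t : ℝ => (t, x)) (by fun_prop)
      (fun t => ⟨trivial, hx⟩)
  have hsub : ∀ t s, ∀ x ∈ Ω, ∀ y ∈ Ω, Fexp f x ν t - Fexp f y ν s =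
      ∫ u in Set.Ioi (0:ℝ), Real.exp (-ν * u) * (f (t - u) x - f (s - u) y) := by
    intro t s x hx y hy
    rw [aux_Fexp_eq, aux_Fexp_eq, ← integral_sub
      (aux_integrable ν hν _ (hcont x hx) C (fun t => hC t x hx) t)
      (aux_integrable ν hν _ (hcont y hy) C (fun t => hC t y hy) s)]
    simp only [mul_sub]
  refine ⟨⟨C / ν, fun t x hx => ?_⟩, ?_, ?_⟩
  · simp only [aux_Fexp_eq]
    exact aux_bound_s9 ν hν _ C (fun u => hC _ x hx)
  · rw [Metric.uniformContinuousOn_iff] at huc ⊢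
    intro ε hε
    obtain ⟨δ, hδ, h⟩ := huc (ε * ν / 2) (by positivity)
    refine ⟨δ, hδ, ?_⟩
    rintro ⟨t, x⟩ ⟨-, hx⟩ ⟨s, y⟩ ⟨-, hy⟩ hd
    simp only at hx hy ⊢
    rw [dist_eq_norm, hsub t s x hx y hy]
    refine lt_of_le_of_lt (aux_bound_s9 ν hν _ (ε * ν / 2) fun u => ?_) ?_
    · have := h (t - u, x) ⟨trivial, hx⟩ (s - u, y) ⟨trivial, hy⟩ (by
        simpa [Prod.dist_eq] using hd)
      rw [dist_eq_norm] at this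
      exact this.le
    · have : ε * ν / 2 / ν = ε / 2 := by field_simp
      linarith
  · intro ε hε
    obtain ⟨l, hl, h⟩ := hrd (ε * ν / 2) (by positivity)
    refine ⟨l, hl, fun a => ?_⟩
    obtain ⟨τ, hτ, hτa⟩ := h a
    refine ⟨τ, ?_, hτa⟩
    simp only [Set.mem_setOf_eq] at hτ ⊢
    have hdiff : ∀ s, ∀ x ∈ Ω, ‖f (s + τ) x - f s x‖ ≤ 2 * C := fun s x hx =>
      (norm_sub_le _ _).trans (by linarith [hC (s + τ) x hx, hC s x hx])
    have hev := eventually_lt_of_limsup_lt hτ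
      (isBoundedUnder_of ⟨2 * C, fun t => aux_sup_le _ _ _ (by positivity) (hdiff t)⟩)
    have hev2 : ∀ᶠ s in cocompact ℝ, ∀ x ∈ Ω, ‖f (s + τ) x - f s x‖ ≤ ε * ν / 2 := by
      filter_upwards [hev] with s hs x hx
      exact (aux_le_sup Ω (fun x => ‖f (s + τ) x - f s x‖) (2 * C) (fun _ => norm_nonneg _)
        (hdiff s) x hx).trans hs.le
    rw [cocompact_eq_atBot_atTop, eventually_sup] at hev2
    obtain ⟨R1, hR1⟩ := eventually_atBot.1 hev2.1
    obtain ⟨R2, hR2⟩ := eventually_atTop.1 hev2.2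
    have hlim : Tendsto (fun t => 2 * (2 * C) / ν * Real.exp (-(ν / 2) * (t - R2))) atTop
        (nhds 0) := by
      have h1 : Tendsto (fun t : ℝ => -(ν / 2) * (t - R2)) atTop atBot :=
        (tendsto_atTop_add_const_right _ (-R2) tendsto_id).const_mul_atTop_of_neg (by linarith)
      simpa using (Real.tendsto_exp_atBot.comp h1).const_mul (2 * (2 * C) / ν)
    have hmain : ∀ᶠ t in cocompact ℝ, ⨆ x ∈ Ω, ‖Fexp f x ν (t + τ) - Fexp f x ν t‖
        ≤ ε / 2 + ε / 4 := by
      have e : ε * ν / 2 / ν = ε / 2 := by field_simp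
      rw [cocompact_eq_atBot_atTop, eventually_sup]
      constructor
      · filter_upwards [eventually_le_atBot R1] with t ht
        refine aux_sup_le _ _ _ (by positivity) fun x hx => ?_
        rw [hsub _ _ x hx x hx]
        have hb : ∀ T, _ := fun T => aux_bound2 ν hν (fun u => f (t + τ - u) x - f (t - u) x)
          (ε * ν / 2) (2 * C) T (by positivity) (by positivity)
          (fun u => by simpa [sub_add_eq_add_sub] using hdiff (t - u) x hx)
          (fun u hu _ => by
            simpa [sub_add_eq_add_sub] using hR1 (t - u) (by linarith) x hx)
        obtain ⟨t', ht'⟩ := (hlim.eventually_lt_const (show 0 < ε / 4 by positivity)).exists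
        have := hb (t' - R2)
        linarith
      · filter_upwards [hlim.eventually_lt_const (show 0 < ε / 4 by positivity)] with t ht
        refine aux_sup_le _ _ _ (by positivity) fun x hx => ?_
        rw [hsub _ _ x hx x hx]
        have hb := aux_bound2 ν hν (fun u => f (t + τ - u) x - f (t - u) x)
          (ε * ν / 2) (2 * C) (t - R2) (by positivity) (by positivity)
          (fun u => by simpa [sub_add_eq_add_sub] using hdiff (t - u) x hx)
          (fun u _ hu => by
            simpa [sub_add_eq_add_sub] using hR2 (t - u) (by linarith) x hx)
        linarith
    refine lt_of_le_of_lt (limsup_le_of_le ?_ hmain) (by linarith)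
    exact (isBoundedUnder_of ⟨0, fun t =>
      aux_sup_nonneg _ _ (fun _ => norm_nonneg _)⟩ :
        IsBoundedUnder (· ≥ ·) _ _).isCoboundedUnder_le
end
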